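/- arXiv:2311.07542 — 4 statements merged into one kernel-verified Lean document; each statement's English description precedes it below -/
import Mathlib

section
/- Let n ≥ 2, let Γ ⊂ ℝⁿ satisfy condition (C) with −λ* = (−1,1,…,1) ∈ Γ, and let B be the open unit ball of ℝⁿ. Suppose v satisfies λ(A[v]) ∈ ℝⁿ∖Γ in B∖{0} in the viscosity sense and lim_{|x|→0} ( v(x) + 2·log|x| ) = −∞. Then limsup_{x→0} v(x) < +∞, and if one sets v(0) := limsup_{x→0} v(x) (possibly −∞), then v is upper semi-continuous on B and is upperconical at 0. -/
open Filter Topology MeasureTheory Metric Set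
open scoped BigOperators ENNReal NNReal Classical

noncomputable section

/-- `ℝⁿ` with the Euclidean norm. -/
abbrev Euc (n : ℕ) := EuclideanSpace ℝ (Fin n)

/-- The positive cone `Γₙ = {λ : λᵢ > 0 ∀ i}`. -/
def GammaN (n : ℕ) : Set (Fin n → ℝ) := {lam | ∀ i, 0 < lam i}

/-- Condition (C): `Γ ⊊ ℝⁿ` is a nonempty open symmetric cone with vertex at the origin
satisfying `Γ + Γₙ ⊆ Γ`. -/
def CondC {n : ℕ} (Γ : Set (Fin n → ℝ)) : Prop :=
  Γ.Nonempty ∧ Γ ≠ Set.univ ∧ IsOpen Γ ∧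
    (∀ σ : Equiv.Perm (Fin n), ∀ lam ∈ Γ, lam ∘ σ ∈ Γ) ∧
    (∀ lam ∈ Γ, ∀ t : ℝ, 0 < t → t • lam ∈ Γ) ∧
    (∀ lam ∈ Γ, ∀ mu ∈ GammaN n, lam + mu ∈ Γ)

/-- `λ* = (1, -1, …, -1)`. -/
def lamStar (n : ℕ) : Fin n → ℝ := fun i => if i.val = 0 then 1 else -1

/-- Partial derivative `∂ᵢ v (x)`. -/
def pgrad {n : ℕ} (v : Euc n → ℝ) (x : Euc n) (i : Fin n) : ℝ :=
  fderiv ℝ v x (EuclideanSpace.single i 1)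

/-- Second partial derivative `∂ᵢ∂ⱼ v (x)`. -/
def phess {n : ℕ} (v : Euc n → ℝ) (x : Euc n) (i j : Fin n) : ℝ :=
  fderiv ℝ (fun y => fderiv ℝ v y (EuclideanSpace.single j 1)) x (EuclideanSpace.single i 1)

/-- The Möbius Hessian
`A[v](x) = e^{-2v(x)} (-∇²v + ∇v ⊗ ∇v - ½ |∇v|² I)` as a matrix. -/
def mobius {n : ℕ} (v : Euc n → ℝ) (x : Euc n) : Matrix (Fin n) (Fin n) ℝ :=
  Real.exp (-2 * v x) • Matrix.of fun i j =>
    - phess v x i j + pgrad v x i * pgrad v x j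
      - (1 / 2) * (∑ k, (pgrad v x k) ^ 2) * (if i = j then (1 : ℝ) else 0)

/-- The (unordered, permutation-invariant) eigenvalue tuple of the symmetric matrix `M`
belongs to the (permutation-invariant) set `S`. -/
def EigIn {n : ℕ} (M : Matrix (Fin n) (Fin n) ℝ) (S : Set (Fin n → ℝ)) : Prop :=
  ∃ hM : M.IsHermitian, hM.eigenvalues ∈ S

/-- Viscosity supersolution of `λ(A[v]) ∈ ∂Γ` in `Ω`, i.e. `λ(A[v]) ∈ closure Γ`
in the viscosity sense (for a real-valued `v`). -/
def Supersol {n : ℕ} (Γ : Set (Fin n → ℝ)) (Ω : Set (Euc n)) (v : Euc n → ℝ) : Prop :=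
  ∀ x₀ ∈ Ω, ∀ φ : Euc n → ℝ, ContDiff ℝ 2 φ → φ x₀ = v x₀ →
    (∀ᶠ x in 𝓝[Ω] x₀, φ x ≤ v x) → EigIn (mobius φ x₀) (closure Γ)

/-- Viscosity subsolution of `λ(A[v]) ∈ ∂Γ` in `Ω`, i.e. `λ(A[v]) ∈ ℝⁿ ∖ Γ`
in the viscosity sense (for a real-valued `v`). -/
def Subsol {n : ℕ} (Γ : Set (Fin n → ℝ)) (Ω : Set (Euc n)) (v : Euc n → ℝ) : Prop :=
  ∀ x₀ ∈ Ω, ∀ φ : Euc n → ℝ, ContDiff ℝ 2 φ → φ x₀ = v x₀ →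
    (∀ᶠ x in 𝓝[Ω] x₀, v x ≤ φ x) → EigIn (mobius φ x₀) Γᶜ


/-- Viscosity supersolution of `λ(A[v]) ∈ ∂Γ` in `Ω`, i.e. `λ(A[v]) ∈ closure Γ` in the
viscosity sense, for an extended-real-valued `v`. -/
def SupersolE {n : ℕ} (Γ : Set (Fin n → ℝ)) (Ω : Set (Euc n)) (v : Euc n → EReal) : Prop :=
  ∀ x₀ ∈ Ω, ∀ φ : Euc n → ℝ, ContDiff ℝ 2 φ → (φ x₀ : EReal) = v x₀ →
    (∀ᶠ x in 𝓝[Ω] x₀, (φ x : EReal) ≤ v x) → EigIn (mobius φ x₀) (closure Γ)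

/-- Viscosity subsolution of `λ(A[v]) ∈ ∂Γ` in `Ω`, i.e. `λ(A[v]) ∈ ℝⁿ ∖ Γ` in the
viscosity sense, for an extended-real-valued `v`. -/
def SubsolE {n : ℕ} (Γ : Set (Fin n → ℝ)) (Ω : Set (Euc n)) (v : Euc n → EReal) : Prop :=
  ∀ x₀ ∈ Ω, ∀ φ : Euc n → ℝ, ContDiff ℝ 2 φ → (φ x₀ : EReal) = v x₀ →
    (∀ᶠ x in 𝓝[Ω] x₀, v x ≤ (φ x : EReal)) → EigIn (mobius φ x₀) Γᶜ

/-- `v` is lowerconical at `x₀ ∈ Ω` (Caffarelli–Li–Nirenberg): either `v x₀ = +∞`, or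
`v x₀ < +∞` and for every `ε > 0` and every smooth `η`,
`inf_{x ∈ Ω} ((v-η)(x) - (v-η)(x₀) - ε|x-x₀|) < 0`. -/
def LowerConical {n : ℕ} (Ω : Set (Euc n)) (v : Euc n → EReal) (x₀ : Euc n) : Prop :=
  v x₀ = ⊤ ∨ (v x₀ ≠ ⊤ ∧ ∀ ε : ℝ, 0 < ε → ∀ η : Euc n → ℝ, ContDiff ℝ (⊤ : ℕ∞) η →
    ∃ x ∈ Ω, v x - (η x : EReal) <
      v x₀ - (η x₀ : EReal) + ((ε * ‖x - x₀‖ : ℝ) : EReal))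

/-- `v` is upperconical at `x₀ ∈ Ω` iff `-v` is lowerconical at `x₀`. -/
def UpperConical {n : ℕ} (Ω : Set (Euc n)) (v : Euc n → EReal) (x₀ : Euc n) : Prop :=
  LowerConical Ω (fun x => -(v x)) x₀


lemma eig_rank_one {n : ℕ} (Γ : Set (Fin n → ℝ)) (hΓ : CondC Γ) (hn : 2 ≤ n)
    (M : Matrix (Fin n) (Fin n) ℝ) (z : Fin n → ℝ) (K ε : ℝ) (hK : 0 < K) (hε : 0 < ε)
    (hmem : (fun i : Fin n => if i.val = 0 then -1 - 2 * ε else (1 : ℝ)) ∈ Γ)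
    (hz : z ≠ 0)
    (hMz : ∀ i j, M i j = K * ((1 / 2) * (∑ k, z k ^ 2) * (if i = j then (1 : ℝ) else 0)
      - (1 + ε) * (z i * z j))) (hM : M.IsHermitian) : hM.eigenvalues ∈ Γ := by
  set Z := ∑ k, z k ^ 2 with hZ
  have hZpos : 0 < Z := by
    obtain ⟨k, hk⟩ := Function.ne_iff.1 hz
    exact Finset.sum_pos' (fun i _ => sq_nonneg _) ⟨k, Finset.mem_univ _, by
      have : z k ≠ 0 := hk
      positivity⟩
  clear_value Z
  set e := hM.eigenvectorBasis with he
  set s : Fin n → ℝ := fun j => ∑ k, z k * e j k with hs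
  -- eigen equation
  have heq : ∀ j i, hM.eigenvalues j * e j i = K * ((1/2) * Z * e j i - (1 + ε) * (z i * s j)) := by
    intro j i
    have h := congrFun (hM.mulVec_eigenvectorBasis j) i
    simp only [Matrix.mulVec, dotProduct, Pi.smul_apply, smul_eq_mul] at h
    rw [← h]
    simp only [hMz]
    rw [hs]
    simp only [Finset.mul_sum, mul_sub, sub_mul, Finset.sum_sub_distrib]
    congr 1
    · rw [Finset.sum_eq_single i]
      · simp; ring
      · intro k _ hk
        simp [Ne.symm hk]
      · simp
    · apply Finset.sum_congr rfl
      intro k _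
      ring
  have hon : ∀ j l, ∑ k, e j k * e l k = if j = l then 1 else 0 := by
    intro j l
    have h := orthonormal_iff_ite.1 e.orthonormal j l
    rw [← h]
    simp [PiLp.inner_apply, mul_comm]
  have hprod : ∀ j l, j ≠ l → s j * s l = 0 := by
    intro j l hjl
    have h1 : ∑ i, (hM.eigenvalues j * e j i) * e l i
        = ∑ i, (K * ((1/2) * Z * e j i - (1 + ε) * (z i * s j))) * e l i :=
      Finset.sum_congr rfl fun i _ => by rw [heq]
    have h2 : ∑ i, (hM.eigenvalues j * e j i) * e l i = 0 := by
      have : ∑ i, (hM.eigenvalues j * e j i) * e l i = hM.eigenvalues j * ∑ i, e j i * e l i := by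
        rw [Finset.mul_sum]; exact Finset.sum_congr rfl fun i _ => by ring
      rw [this, hon, if_neg hjl, mul_zero]
    have h3 : ∑ i, (K * ((1/2) * Z * e j i - (1 + ε) * (z i * s j))) * e l i
        = K * (1/2) * Z * (∑ i, e j i * e l i) - K * (1 + ε) * s j * ∑ i, z i * e l i := by
      rw [Finset.mul_sum, Finset.mul_sum, ← Finset.sum_sub_distrib]
      exact Finset.sum_congr rfl fun i _ => by ring
    rw [h2, h3, hon, if_neg hjl] at h1
    have h4 : K * (1 + ε) * (s j * s l) = 0 := by
      have : s l = ∑ i, z i * e l i := rfl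
      rw [this]; linarith
    rcases mul_eq_zero.1 h4 with h5 | h5
    · have : 0 < K * (1 + ε) := by positivity
      linarith
    · exact h5
  have hex : ∃ i0, s i0 ≠ 0 := by
    by_contra hcon
    push Not at hcon
    apply hz
    have h0 : (WithLp.toLp 2 z : Euc n) = 0 := by
      apply InnerProductSpace.ext_inner_left_basis e.toBasis
      intro i
      have := hcon i
      simp only [hs] at this
      simp [PiLp.inner_apply]
      exact this
    funext i
    have := congrArg (fun u : Euc n => u i) h0
    simpa using this
  obtain ⟨i0, hi0⟩ := hex
  have hne : 0 < n := by omega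
  set o : Fin n := ⟨0, hne⟩ with ho
  have hfin : hM.eigenvalues = ((K * Z / 2) •
      (fun i : Fin n => if i.val = 0 then -1 - 2 * ε else (1 : ℝ))) ∘ (Equiv.swap i0 o) := by
    funext j
    by_cases hj : j = i0
    · subst hj
      have h1 : ∑ i, (hM.eigenvalues j * e j i) * z i
        = ∑ i, (K * ((1/2) * Z * e j i - (1 + ε) * (z i * s j))) * z i :=
        Finset.sum_congr rfl fun i _ => by rw [heq]
      have h2 : ∑ i, (hM.eigenvalues j * e j i) * z i = hM.eigenvalues j * s j := by
        simp only [hs]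
        rw [Finset.mul_sum]; exact Finset.sum_congr rfl fun i _ => by ring
      have h3 : ∑ i, (K * ((1/2) * Z * e j i - (1 + ε) * (z i * s j))) * z i
         = K * (1/2) * Z * (∑ i, z i * e j i) - K * (1 + ε) * s j * ∑ i, z i ^ 2 := by
        rw [Finset.mul_sum, Finset.mul_sum, ← Finset.sum_sub_distrib]
        exact Finset.sum_congr rfl fun i _ => by ring
      have h4 : hM.eigenvalues j * s j = (K * Z / 2 * (-1 - 2 * ε)) * s j := by
        have h5 : s j = ∑ i, z i * e j i := rfl
        rw [← h2, h1, h3, ← h5, ← hZ]; ring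
      have := mul_right_cancel₀ hi0 h4
      simp [this, ho]
    · have hsj : s j = 0 := by
        rcases mul_eq_zero.1 (hprod j i0 hj) with h | h
        · exact h
        · exact absurd h hi0
      have h1 : ∑ i, (hM.eigenvalues j * e j i) * e j i
        = ∑ i, (K * ((1/2) * Z * e j i - (1 + ε) * (z i * s j))) * e j i :=
        Finset.sum_congr rfl fun i _ => by rw [heq]
      have h2 : ∑ i, (hM.eigenvalues j * e j i) * e j i = hM.eigenvalues j := by
        have : ∑ i, (hM.eigenvalues j * e j i) * e j i = hM.eigenvalues j * ∑ i, e j i * e j i := by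
          rw [Finset.mul_sum]; exact Finset.sum_congr rfl fun i _ => by ring
        rw [this, hon, if_pos rfl, mul_one]
      have h3 : ∑ i, (K * ((1/2) * Z * e j i - (1 + ε) * (z i * s j))) * e j i = K * Z / 2 := by
        have : ∑ i, (K * ((1/2) * Z * e j i - (1 + ε) * (z i * s j))) * e j i
            = K * Z / 2 * ∑ i, e j i * e j i := by
          rw [Finset.mul_sum, hsj]; exact Finset.sum_congr rfl fun i _ => by ring
        rw [this, hon, if_pos rfl, mul_one]
      have h4 : (Equiv.swap i0 o j).val ≠ 0 := by
        intro h
        have h5 : Equiv.swap i0 o j = o := Fin.ext h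
        apply hj
        have := (Equiv.swap i0 o).injective (h5.trans (Equiv.swap_apply_left i0 o).symm)
        exact this
      rw [← h2, h1, h3]
      simp [h4]
  rw [hfin]
  obtain ⟨-, -, -, hperm, hcone, -⟩ := hΓ
  exact hperm _ _ (hcone _ hmem _ (by positivity))

lemma hasFDerivAt_rdiv {n : ℕ} {f g : Euc n → ℝ} {f' g' : Euc n →L[ℝ] ℝ} {x : Euc n}
    (hf : HasFDerivAt f f' x) (hg : HasFDerivAt g g' x) (h : g x ≠ 0) :
    HasFDerivAt (fun y => f y / g y) ((g x ^ 2)⁻¹ • (g x • f' - f x • g')) x := by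
  have h1 : HasFDerivAt (fun y => (g y)⁻¹) ((-(g x ^ 2)⁻¹) • g') x :=
    (hasDerivAt_inv h).comp_hasFDerivAt x hg
  have h2 := hf.fun_mul h1
  have e : (g x ^ 2)⁻¹ • (g x • f' - f x • g') = f x • (-(g x ^ 2)⁻¹) • g' + (g x)⁻¹ • f' := by
    ext u
    simp
    field_simp
    ring
  rw [e]
  simpa only [div_eq_mul_inv] using h2

lemma pgrad_congr {n : ℕ} {f g : Euc n → ℝ} {x : Euc n} (h : f =ᶠ[𝓝 x] g) (i : Fin n) :
    pgrad f x i = pgrad g x i := by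
  unfold pgrad; rw [h.fderiv_eq]

lemma phess_congr {n : ℕ} {f g : Euc n → ℝ} {x : Euc n} (h : f =ᶠ[𝓝 x] g) (i j : Fin n) :
    phess f x i j = phess g x i j := by
  unfold phess
  have : (fun y => fderiv ℝ f y (EuclideanSpace.single j 1)) =ᶠ[𝓝 x]
      (fun y => fderiv ℝ g y (EuclideanSpace.single j 1)) := by
    filter_upwards [h.fderiv (𝕜 := ℝ)] with y hy
    rw [hy]
  rw [this.fderiv_eq]

lemma phess_of_pgrad {n : ℕ} {f : Euc n → ℝ} {g : Euc n → ℝ} {x : Euc n} {j : Fin n}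
    (h : ∀ᶠ y in 𝓝 x, pgrad f y j = g y) (i : Fin n) :
    phess f x i j = fderiv ℝ g x (EuclideanSpace.single i 1) := by
  unfold phess
  have : (fun y => fderiv ℝ f y (EuclideanSpace.single j 1)) =ᶠ[𝓝 x] g := h
  rw [this.fderiv_eq]

/-- The quadratic `c + 2 b·x + k |x|²`. -/
def quadF {n : ℕ} (b : Euc n) (c k : ℝ) (x : Euc n) : ℝ := c + 2 * inner ℝ b x + k * ‖x‖ ^ 2

lemma quadF_hasFDerivAt {n : ℕ} (b : Euc n) (c k : ℝ) (x : Euc n) :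
    HasFDerivAt (quadF b c k) ((2 : ℝ) • innerSL ℝ b + k • ((2 : ℝ) • innerSL ℝ x)) x := by
  unfold quadF
  have h1 : HasFDerivAt (fun y : Euc n => (inner ℝ b y : ℝ)) (innerSL ℝ b : Euc n →L[ℝ] ℝ) x :=
    (innerSL ℝ b : Euc n →L[ℝ] ℝ).hasFDerivAt
  have h2 : HasFDerivAt (fun y : Euc n => ‖y‖ ^ 2) ((2 : ℝ) • innerSL ℝ x) x := by
    have := (hasStrictFDerivAt_norm_sq (F := Euc n) x).hasFDerivAt
    have e : (2 : ℝ) • innerSL ℝ x = (2 : ℕ) • innerSL ℝ x := by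
      rw [← Nat.cast_smul_eq_nsmul ℝ]; norm_num
    rw [e]; exact this
  exact ((h1.const_mul 2).const_add c).add (h2.const_mul k)

lemma quadF_contDiff {n : ℕ} (b : Euc n) (c k : ℝ) : ContDiff ℝ 2 (quadF b c k) := by
  unfold quadF
  have h1 : ContDiff ℝ 2 (fun y : Euc n => inner ℝ b y) := contDiff_const.inner ℝ contDiff_id
  have h2 : ContDiff ℝ 2 (fun y : Euc n => ‖y‖ ^ 2) := contDiff_norm_sq ℝ
  exact (contDiff_const.add (contDiff_const.mul h1)).add (contDiff_const.mul h2)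

lemma pgrad_neglog {n : ℕ} (b : Euc n) (c k : ℝ) (x : Euc n) (hx : quadF b c k x ≠ 0) (j : Fin n) :
    pgrad (fun y => - Real.log (quadF b c k y)) x j = - (2 * b j + 2 * k * x j) / quadF b c k x := by
  unfold pgrad
  rw [(((quadF_hasFDerivAt b c k x).log hx).fun_neg).fderiv]
  simp [EuclideanSpace.inner_single_right]
  field_simp

lemma phess_neglog {n : ℕ} (b : Euc n) (c k : ℝ) (x : Euc n) (hx : quadF b c k x ≠ 0)
    (hd : ‖b‖ ^ 2 = c * k) (i j : Fin n) :
    phess (fun y => - Real.log (quadF b c k y)) x i j =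
      pgrad (fun y => - Real.log (quadF b c k y)) x i * pgrad (fun y => - Real.log (quadF b c k y)) x j
      - (1 / 2) * (∑ l, (pgrad (fun y => - Real.log (quadF b c k y)) x l) ^ 2) *
        (if i = j then (1 : ℝ) else 0) := by
  have hcont : Continuous (quadF b c k) := (quadF_contDiff b c k).continuous
  have hev : ∀ᶠ y in 𝓝 x, pgrad (fun y => - Real.log (quadF b c k y)) y j
      = - (2 * b j + 2 * k * y j) / quadF b c k y := by
    filter_upwards [hcont.continuousAt.eventually_ne hx] with y hy
    exact pgrad_neglog b c k y hy j
  rw [phess_of_pgrad hev]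
  have h1 : HasFDerivAt (fun y : Euc n => y j) (EuclideanSpace.proj j : Euc n →L[ℝ] ℝ) x :=
    (EuclideanSpace.proj j : Euc n →L[ℝ] ℝ).hasFDerivAt
  have h2 := hasFDerivAt_rdiv (((h1.const_mul (2 * k)).const_add (2 * b j)).fun_neg) (quadF_hasFDerivAt b c k x) hx
  have h3 : fderiv ℝ (fun y : Euc n => - (2 * b j + 2 * k * y j) / quadF b c k y) x = _ := h2.fderiv
  rw [h3]
  simp only [pgrad_neglog b c k x hx]
  have hsum : ∑ l, (-(2 * b l + 2 * k * x l) / quadF b c k x) ^ 2 = 4 * k / quadF b c k x := by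
    have : ∑ l, (-(2 * b l + 2 * k * x l) / quadF b c k x) ^ 2
        = (4 / quadF b c k x ^ 2) * (∑ l, b l ^ 2 + 2 * k * ∑ l, b l * x l + k ^ 2 * ∑ l, x l ^ 2) := by
      rw [Finset.mul_sum, Finset.mul_sum, ← Finset.sum_add_distrib, ← Finset.sum_add_distrib,
        Finset.mul_sum]
      exact Finset.sum_congr rfl fun l _ => by ring
    rw [this]
    have e1 : ∑ l, b l ^ 2 = ‖b‖ ^ 2 := (EuclideanSpace.real_norm_sq_eq b).symm
    have e2 : ∑ l, x l ^ 2 = ‖x‖ ^ 2 := (EuclideanSpace.real_norm_sq_eq x).symm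
    have e3 : ∑ l, b l * x l = inner ℝ b x := by
      simp [PiLp.inner_apply, mul_comm]
    rw [e1, e2, e3, hd]
    have : c * k + 2 * k * inner ℝ b x + k ^ 2 * ‖x‖ ^ 2 = k * quadF b c k x := by
      unfold quadF; ring
    rw [this]
    field_simp
  rw [hsum]
  by_cases hij : i = j
  · subst hij
    simp [EuclideanSpace.inner_single_right]
    field_simp
    ring
  · simp [EuclideanSpace.inner_single_right, hij, Ne.symm hij]
    field_simp
    try ring

/-- The soft maximum barrier. -/
def softM {n : ℕ} (ε δ : ℝ) (α β : Euc n → ℝ) (x : Euc n) : ℝ :=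
  (1 / ε) * Real.log (δ * Real.exp (ε * α x) + Real.exp (ε * β x))

lemma pgrad_softM {n : ℕ} {ε δ : ℝ} (hε : 0 < ε) (hδ : 0 < δ) {α β : Euc n → ℝ} {x : Euc n}
    (hα : DifferentiableAt ℝ α x) (hβ : DifferentiableAt ℝ β x) (j : Fin n) :
    pgrad (softM ε δ α β) x j =
      (δ * Real.exp (ε * α x) * pgrad α x j + Real.exp (ε * β x) * pgrad β x j) /
        (δ * Real.exp (ε * α x) + Real.exp (ε * β x)) := by
  have hS : δ * Real.exp (ε * α x) + Real.exp (ε * β x) ≠ 0 := by positivity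
  have h := ((((hα.hasFDerivAt.const_mul ε).exp.const_mul δ).fun_add
    (hβ.hasFDerivAt.const_mul ε).exp).log hS).const_mul (1 / ε)
  have h3 : fderiv ℝ (softM ε δ α β) x = _ := h.fderiv
  unfold pgrad
  rw [h3]
  simp
  field_simp

lemma phess_softM {n : ℕ} {ε δ : ℝ} (hε : 0 < ε) (hδ : 0 < δ) {α β : Euc n → ℝ} {x : Euc n}
    (hα : ContDiffAt ℝ 2 α x) (hβ : ContDiffAt ℝ 2 β x) (i j : Fin n) (E F : ℝ)
    (hE : E = δ * Real.exp (ε * α x)) (hF : F = Real.exp (ε * β x)) :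
    phess (softM ε δ α β) x i j =
      ((E * (ε * pgrad α x i * pgrad α x j + phess α x i j) +
        F * (ε * pgrad β x i * pgrad β x j + phess β x i j)) * (E + F)
        - (E * pgrad α x j + F * pgrad β x j) * (ε * (E * pgrad α x i + F * pgrad β x i)))
        / (E + F) ^ 2 := by
  have dα : ∀ᶠ y in 𝓝 x, DifferentiableAt ℝ α y :=
    (hα.eventually (by simp)).mono fun y hy => hy.differentiableAt (by simp)
  have dβ : ∀ᶠ y in 𝓝 x, DifferentiableAt ℝ β y :=
    (hβ.eventually (by simp)).mono fun y hy => hy.differentiableAt (by simp)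
  have hev : ∀ᶠ y in 𝓝 x, pgrad (softM ε δ α β) y j =
      (δ * Real.exp (ε * α y) * pgrad α y j + Real.exp (ε * β y) * pgrad β y j) /
        (δ * Real.exp (ε * α y) + Real.exp (ε * β y)) := by
    filter_upwards [dα, dβ] with y h1 h2
    exact pgrad_softM hε hδ h1 h2 j
  rw [phess_of_pgrad hev]
  have hS : δ * Real.exp (ε * α x) + Real.exp (ε * β x) ≠ 0 := by positivity
  have gα : DifferentiableAt ℝ (fun y => pgrad α y j) x := by
    have := (hα.fderiv_right (m := 1) (by norm_num)).differentiableAt (by simp)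
    exact this.clm_apply (differentiableAt_const _)
  have gβ : DifferentiableAt ℝ (fun y => pgrad β y j) x := by
    have := (hβ.fderiv_right (m := 1) (by norm_num)).differentiableAt (by simp)
    exact this.clm_apply (differentiableAt_const _)
  have e1 := (dα.self_of_nhds.hasFDerivAt.const_mul ε).exp.const_mul δ
  have e2 := (dβ.self_of_nhds.hasFDerivAt.const_mul ε).exp
  have h := hasFDerivAt_rdiv ((e1.fun_mul gα.hasFDerivAt).fun_add (e2.fun_mul gβ.hasFDerivAt))
    (e1.fun_add e2) hS
  rw [h.fderiv]
  have p1 : phess α x i j = fderiv ℝ (fun y => pgrad α y j) x (EuclideanSpace.single i 1) := rfl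
  have p2 : phess β x i j = fderiv ℝ (fun y => pgrad β y j) x (EuclideanSpace.single i 1) := rfl
  have p3 : pgrad α x i = fderiv ℝ α x (EuclideanSpace.single i 1) := rfl
  have p4 : pgrad β x i = fderiv ℝ β x (EuclideanSpace.single i 1) := rfl
  simp only [_root_.smul_apply, _root_.add_apply,
    _root_.sub_apply, smul_eq_mul, ← p1, ← p2, ← p3, ← p4]
  rw [← hF] at hS ⊢
  have hE' : δ * Real.exp (ε * α x) = E := hE.symm
  rw [hE'] at hS ⊢
  field_simp
  rw [← hE']
  ring

lemma softM_mobius {n : ℕ} {ε δ : ℝ} (hε : 0 < ε) (hδ : 0 < δ) {α β : Euc n → ℝ} {x : Euc n}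
    (hα : ContDiffAt ℝ 2 α x) (hβ : ContDiffAt ℝ 2 β x)
    (Hα : ∀ i j, phess α x i j = pgrad α x i * pgrad α x j
      - (1 / 2) * (∑ l, (pgrad α x l) ^ 2) * (if i = j then (1 : ℝ) else 0))
    (Hβ : ∀ i j, phess β x i j = pgrad β x i * pgrad β x j
      - (1 / 2) * (∑ l, (pgrad β x l) ^ 2) * (if i = j then (1 : ℝ) else 0)) :
    ∃ K : ℝ, 0 < K ∧ ∀ i j, - phess (softM ε δ α β) x i j
        + pgrad (softM ε δ α β) x i * pgrad (softM ε δ α β) x j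
        - (1 / 2) * (∑ k, (pgrad (softM ε δ α β) x k) ^ 2) * (if i = j then (1 : ℝ) else 0)
      = K * ((1 / 2) * (∑ k, (pgrad α x k - pgrad β x k) ^ 2) * (if i = j then (1 : ℝ) else 0)
      - (1 + ε) * ((pgrad α x i - pgrad β x i) * (pgrad α x j - pgrad β x j))) := by
  obtain ⟨E, hE⟩ : ∃ E, E = δ * Real.exp (ε * α x) := ⟨_, rfl⟩
  obtain ⟨F, hF⟩ : ∃ F, F = Real.exp (ε * β x) := ⟨_, rfl⟩
  have hE0 : 0 < E := by rw [hE]; positivity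
  have hF0 : 0 < F := by rw [hF]; positivity
  refine ⟨E * F / (E + F) ^ 2, by positivity, fun i j => ?_⟩
  rw [phess_softM hε hδ hα hβ i j E F hE hF, Hα, Hβ]
  simp only [pgrad_softM hε hδ (hα.differentiableAt (by simp)) (hβ.differentiableAt (by simp)),
    ← hE, ← hF]
  have s1 : ∑ k, ((E * pgrad α x k + F * pgrad β x k) / (E + F)) ^ 2
      = (E ^ 2 * (∑ k, pgrad α x k ^ 2) + 2 * E * F * (∑ k, pgrad α x k * pgrad β x k)
        + F ^ 2 * (∑ k, pgrad β x k ^ 2)) / (E + F) ^ 2 := by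
    rw [Finset.mul_sum, Finset.mul_sum, Finset.mul_sum, ← Finset.sum_add_distrib,
      ← Finset.sum_add_distrib, Finset.sum_div]
    exact Finset.sum_congr rfl fun k _ => by rw [div_pow]; ring
  have s2 : ∑ k, (pgrad α x k - pgrad β x k) ^ 2
      = (∑ k, pgrad α x k ^ 2) - 2 * (∑ k, pgrad α x k * pgrad β x k)
        + (∑ k, pgrad β x k ^ 2) := by
    rw [Finset.mul_sum, ← Finset.sum_sub_distrib, ← Finset.sum_add_distrib]
    exact Finset.sum_congr rfl fun k _ => by ring
  rw [s1, s2]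
  generalize (if i = j then (1 : ℝ) else 0) = d
  have : E + F ≠ 0 := by positivity
  field_simp
  ring

lemma exists_global_ext {n : ℕ} {Φ : Euc n → ℝ} {x₀ : Euc n} (h : ContDiffAt ℝ 2 Φ x₀) :
    ∃ φ : Euc n → ℝ, ContDiff ℝ 2 φ ∧ φ =ᶠ[𝓝 x₀] Φ := by
  have hev : ∀ᶠ y in 𝓝 x₀, ContDiffAt ℝ 2 Φ y := h.eventually (by simp)
  obtain ⟨s, hs, hball⟩ := Metric.eventually_nhds_iff_ball.1 hev
  let f : ContDiffBump x₀ := ⟨s / 3, s / 2, by positivity, by linarith⟩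
  refine ⟨fun y => f y * Φ y, ?_, ?_⟩
  · rw [contDiff_iff_contDiffAt]
    intro y
    by_cases hy : y ∈ ball x₀ s
    · exact f.contDiff.contDiffAt.mul (hball y hy)
    · have hy2 : y ∉ tsupport f := by
        rw [f.tsupport_eq]
        intro hc
        apply hy
        rw [mem_closedBall] at hc
        rw [mem_ball]
        have : f.rOut = s / 2 := rfl
        rw [this] at hc
        linarith
      have h0 : (fun y => f y * Φ y) =ᶠ[𝓝 y] fun _ => 0 := by
        filter_upwards [notMem_tsupport_iff_eventuallyEq.1 hy2] with z hz
        rw [hz]; simp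
      exact contDiffAt_const.congr_of_eventuallyEq h0
  · filter_upwards [f.eventuallyEq_one] with y hy
    rw [hy]; simp

/-- barrier -/
def barr {n : ℕ} (ε δ : ℝ) (b : Euc n) : Euc n → ℝ :=
  softM ε δ (fun y => - Real.log (quadF 0 0 1 y)) (fun y => - Real.log (quadF b 1 (‖b‖ ^ 2) y))

lemma quadF_zero {n : ℕ} (x : Euc n) : quadF 0 0 1 x = ‖x‖ ^ 2 := by simp [quadF]

lemma abs_inner_lt {n : ℕ} (b x : Euc n) (h : ‖b‖ * ‖x‖ < 1) : -1 < inner ℝ b x := by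
  have := (abs_le.1 (abs_real_inner_le_norm b x)).1
  linarith

lemma quadF_pos {n : ℕ} (b x : Euc n) (h : ‖b‖ * ‖x‖ < 1) : 0 < quadF b 1 (‖b‖ ^ 2) x := by
  unfold quadF
  have := (abs_le.1 (abs_real_inner_le_norm b x)).1
  nlinarith [norm_nonneg b, norm_nonneg x, mul_nonneg (norm_nonneg b) (norm_nonneg x)]

lemma neglog_contDiffAt {n : ℕ} (b : Euc n) (c k : ℝ) (x : Euc n) (h : quadF b c k x ≠ 0) :
    ContDiffAt ℝ 2 (fun y => - Real.log (quadF b c k y)) x :=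
  ((quadF_contDiff b c k).contDiffAt.log h).neg

lemma barr_contDiffAt {n : ℕ} {ε δ : ℝ} (hδ : 0 < δ) (b x : Euc n)
    (hx : x ≠ 0) (h : ‖b‖ * ‖x‖ < 1) : ContDiffAt ℝ 2 (barr ε δ b) x := by
  have h1 := neglog_contDiffAt (0 : Euc n) 0 1 x (by rw [quadF_zero]; positivity)
  have h2 := neglog_contDiffAt b 1 (‖b‖ ^ 2) x (quadF_pos b x h).ne'
  unfold barr softM
  refine contDiffAt_const.mul (ContDiffAt.log ?_ (by positivity))
  exact (contDiffAt_const.mul (contDiffAt_const.mul h1).exp).add (contDiffAt_const.mul h2).exp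

lemma no_touch {n : ℕ} (hn : 2 ≤ n) (Γ : Set (Fin n → ℝ)) (hΓ : CondC Γ)
    {ε δ : ℝ} (hε : 0 < ε) (hδ : 0 < δ)
    (hmem : (fun i : Fin n => if i.val = 0 then -1 - 2 * ε else (1 : ℝ)) ∈ Γ)
    (Ω : Set (Euc n)) (v : Euc n → EReal) (hsub : SubsolE Γ Ω v)
    (b x₀ : Euc n) (hx₀ : x₀ ∈ Ω) (hx : x₀ ≠ 0) (h : ‖b‖ * ‖x₀‖ < 1) (c : ℝ)
    (hval : ((barr ε δ b x₀ + c : ℝ) : EReal) = v x₀)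
    (hev : ∀ᶠ x in 𝓝[Ω] x₀, v x ≤ ((barr ε δ b x + c : ℝ) : EReal)) : False := by
  obtain ⟨φ, hφ, hφe⟩ := exists_global_ext
    ((barr_contDiffAt (ε := ε) hδ b x₀ hx h).add (contDiffAt_const (c := c)))
  have hP : quadF (0 : Euc n) 0 1 x₀ ≠ 0 := by rw [quadF_zero]; positivity
  have hD := (quadF_pos b x₀ h).ne'
  have hφ0 := hφe.self_of_nhds
  obtain ⟨hM, hMem⟩ := hsub x₀ hx₀ φ hφ (by rw [hφ0]; exact hval) (by
    filter_upwards [hev, hφe.filter_mono nhdsWithin_le_nhds] with y h1 h2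
    rw [h2]; exact h1)
  apply hMem
  have hg : ∀ i, pgrad φ x₀ i = pgrad (barr ε δ b) x₀ i := by
    intro i
    rw [pgrad_congr hφe]
    unfold pgrad
    have : fderiv ℝ (fun x => barr ε δ b x + c) x₀ = fderiv ℝ (barr ε δ b) x₀ := by
      exact fderiv_add_const c
    rw [this]
  have hh : ∀ i j, phess φ x₀ i j = phess (barr ε δ b) x₀ i j := by
    intro i j
    rw [phess_congr hφe]
    unfold phess
    have : ∀ y, fderiv ℝ (fun x => barr ε δ b x + c) y = fderiv ℝ (barr ε δ b) y := by
      intro y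
      exact fderiv_add_const c
    simp only [this]
  obtain ⟨K, hK, hKe⟩ := softM_mobius hε hδ (neglog_contDiffAt (0 : Euc n) 0 1 x₀ hP)
    (neglog_contDiffAt b 1 (‖b‖ ^ 2) x₀ hD)
    (phess_neglog _ _ _ _ hP (by simp)) (phess_neglog _ _ _ _ hD (by simp))
  refine eig_rank_one Γ hΓ hn (mobius φ x₀)
    (fun i => pgrad (fun y => - Real.log (quadF (0 : Euc n) 0 1 y)) x₀ i -
      pgrad (fun y => - Real.log (quadF b 1 (‖b‖ ^ 2) y)) x₀ i)
    (Real.exp (-2 * φ x₀) * K) ε (by positivity) hε hmem ?_ ?_ hM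
  · intro hz
    have hz' : ∀ i, x₀ i * quadF b 1 (‖b‖ ^ 2) x₀ = ‖x₀‖ ^ 2 * (b i + ‖b‖ ^ 2 * x₀ i) := by
      intro i
      have h1 := congrFun hz i
      simp only [Pi.zero_apply] at h1
      rw [pgrad_neglog _ _ _ _ hP, pgrad_neglog _ _ _ _ hD, quadF_zero] at h1
      rw [quadF_zero] at hP
      have h2 := sub_eq_zero.1 h1
      rw [div_eq_div_iff hP hD] at h2
      simp at h2
      linarith
    have e2 : ∑ l, x₀ l * x₀ l = ‖x₀‖ ^ 2 := by
      rw [EuclideanSpace.real_norm_sq_eq x₀]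
      exact Finset.sum_congr rfl fun i _ => by ring
    have e3 : ∑ l, b l * x₀ l = inner ℝ b x₀ := by
      simp [PiLp.inner_apply, mul_comm]
    have h3 : ∑ i, x₀ i * (x₀ i * quadF b 1 (‖b‖ ^ 2) x₀)
      = ∑ i, x₀ i * (‖x₀‖ ^ 2 * (b i + ‖b‖ ^ 2 * x₀ i)) :=
      Finset.sum_congr rfl fun i _ => by rw [hz']
    have h4 : ∑ i, x₀ i * (x₀ i * quadF b 1 (‖b‖ ^ 2) x₀) = ‖x₀‖ ^ 2 * quadF b 1 (‖b‖ ^ 2) x₀ := by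
      rw [← e2, Finset.sum_mul]
      exact Finset.sum_congr rfl fun i _ => by ring
    have h5 : ∑ i, x₀ i * (‖x₀‖ ^ 2 * (b i + ‖b‖ ^ 2 * x₀ i))
        = ‖x₀‖ ^ 2 * (∑ l, b l * x₀ l + ‖b‖ ^ 2 * ∑ l, x₀ l * x₀ l) := by
      rw [Finset.mul_sum, ← Finset.sum_add_distrib, Finset.mul_sum]
      exact Finset.sum_congr rfl fun i _ => by ring
    rw [h4, h5, e2, e3] at h3
    have h6 := mul_left_cancel₀ (by positivity) h3
    unfold quadF at h6
    have := abs_inner_lt b x₀ h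
    linarith
  · intro i j
    have := hKe i j
    simp only [mobius, Matrix.smul_apply, Matrix.of_apply, smul_eq_mul, hg, hh]
    rw [mul_assoc (Real.exp (-2 * φ x₀)) K, ← this]
    rfl

lemma key_comparison {n : ℕ} (hn : 2 ≤ n) (Γ : Set (Fin n → ℝ)) (hΓ : CondC Γ)
    {ε : ℝ} (hε : 0 < ε)
    (hmem : (fun i : Fin n => if i.val = 0 then -1 - 2 * ε else (1 : ℝ)) ∈ Γ)
    (v : Euc n → EReal) (husc : UpperSemicontinuousOn v (ball 0 1 \ {0}))
    (htop : ∀ x ∈ ball (0 : Euc n) 1 \ {0}, v x < ⊤)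
    (hsub : SubsolE Γ (ball 0 1 \ {0}) v)
    (hlim : Filter.Tendsto (fun x => v x + ((2 * Real.log ‖x‖ : ℝ) : EReal))
      (𝓝[ball 0 1 \ {0}] (0 : Euc n)) (𝓝 (⊥ : EReal)))
    (b : Euc n) (r : ℝ) (hr0 : 0 < r) (hr1 : r < 1) (hbr : ‖b‖ * r < 1) (M : ℝ)
    (hbd : ∀ x : Euc n, ‖x‖ = r → v x ≤ ((M - Real.log (quadF b 1 (‖b‖ ^ 2) x) : ℝ) : EReal)) :
    ∀ x : Euc n, x ≠ 0 → ‖x‖ ≤ r →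
      v x ≤ ((M - Real.log (quadF b 1 (‖b‖ ^ 2) x) : ℝ) : EReal) := by
  intro x₁ hx₁ hx₁r
  by_contra hcon
  push Not at hcon
  have hb : ∀ x : Euc n, ‖x‖ ≤ r → ‖b‖ * ‖x‖ < 1 := fun x hx =>
    lt_of_le_of_lt (mul_le_mul_of_nonneg_left hx (norm_nonneg b)) hbr
  have hΩ : ∀ x : Euc n, x ≠ 0 → ‖x‖ ≤ r → x ∈ ball (0 : Euc n) 1 \ {0} := fun x hx hxr =>
    ⟨by rw [mem_ball_zero_iff]; linarith, hx⟩
  -- v x₁ is real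
  obtain ⟨t, ht⟩ : ∃ t : ℝ, v x₁ = (t : EReal) := by
    refine ⟨(v x₁).toReal, (EReal.coe_toReal (htop x₁ (hΩ x₁ hx₁ hx₁r)).ne ?_).symm⟩
    exact (lt_of_le_of_lt bot_le hcon).ne'
  rw [ht, EReal.coe_lt_coe_iff] at hcon
  -- choose δ
  obtain ⟨δ, hδ, hδ1⟩ : ∃ δ : ℝ, 0 < δ ∧ barr ε δ b x₁ + M < t := by
    set E := Real.exp (ε * (- Real.log (quadF 0 0 1 x₁))) with hE
    set F := Real.exp (ε * (- Real.log (quadF b 1 (‖b‖ ^ 2) x₁))) with hF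
    have hE0 : 0 < E := Real.exp_pos _
    have hF0 : 0 < F := Real.exp_pos _
    have hFlt : F < Real.exp (ε * (t - M)) := by
      rw [hF, Real.exp_lt_exp]
      exact mul_lt_mul_of_pos_left (by linarith) hε
    refine ⟨(Real.exp (ε * (t - M)) - F) / (2 * E), div_pos (by linarith) (by positivity), ?_⟩
    have h1 : Real.log ((Real.exp (ε * (t - M)) - F) / (2 * E) * E + F) < ε * (t - M) := by
      have h2 : (Real.exp (ε * (t - M)) - F) / (2 * E) * E + F
          = (Real.exp (ε * (t - M)) + F) / 2 := by
        field_simp; ring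
      rw [h2, Real.log_lt_iff_lt_exp (by positivity)]
      linarith
    have h3 : (1 / ε) * Real.log ((Real.exp (ε * (t - M)) - F) / (2 * E) * E + F) < t - M := by
      rw [div_mul_eq_mul_div, one_mul, div_lt_iff₀ hε]
      linarith
    have h4 : barr ε ((Real.exp (ε * (t - M)) - F) / (2 * E)) b x₁ =
      (1 / ε) * Real.log ((Real.exp (ε * (t - M)) - F) / (2 * E) * E + F) := rfl
    rw [h4]; linarith
  -- barrier lower bounds
  have hlow1 : ∀ x : Euc n, - Real.log (quadF b 1 (‖b‖ ^ 2) x) < barr ε δ b x := by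
    intro x
    have h1 : ε * (- Real.log (quadF b 1 (‖b‖ ^ 2) x)) <
        Real.log (δ * Real.exp (ε * (- Real.log (quadF 0 0 1 x))) +
          Real.exp (ε * (- Real.log (quadF b 1 (‖b‖ ^ 2) x)))) := by
      rw [Real.lt_log_iff_exp_lt (by positivity)]
      have : 0 < δ * Real.exp (ε * (- Real.log (quadF 0 0 1 x))) := by positivity
      linarith
    unfold barr softM
    rw [div_mul_eq_mul_div, one_mul, lt_div_iff₀ hε]
    linarith
  have hlow2 : ∀ x : Euc n, (1 / ε) * Real.log δ - 2 * Real.log ‖x‖ < barr ε δ b x := by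
    intro x
    have h0 : Real.log (quadF 0 0 1 x) = 2 * Real.log ‖x‖ := by
      rw [quadF_zero, Real.log_pow]; norm_num
    have h1 : Real.log δ + ε * (- Real.log (quadF 0 0 1 x)) <
        Real.log (δ * Real.exp (ε * (- Real.log (quadF 0 0 1 x))) +
          Real.exp (ε * (- Real.log (quadF b 1 (‖b‖ ^ 2) x)))) := by
      rw [Real.lt_log_iff_exp_lt (by positivity), Real.exp_add, Real.exp_log hδ]
      have : 0 < Real.exp (ε * (- Real.log (quadF b 1 (‖b‖ ^ 2) x))) := by positivity
      linarith
    rw [h0] at h1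
    have : (1 / ε) * Real.log δ - 2 * Real.log ‖x‖ = (Real.log δ + ε * (- (2 * Real.log ‖x‖))) / ε := by
      field_simp; ring
    rw [this]
    unfold barr softM
    beta_reduce
    rw [h0, div_mul_eq_mul_div, one_mul]
    exact div_lt_div_of_pos_right h1 hε
  -- near zero
  obtain ⟨s, hs0, hs⟩ : ∃ s : ℝ, 0 < s ∧ ∀ x : Euc n, x ≠ 0 → ‖x‖ ≤ s → ‖x‖ ≤ r →
      v x < ((barr ε δ b x + M : ℝ) : EReal) := by
    have h1 : ∀ᶠ x in 𝓝[ball 0 1 \ {0}] (0 : Euc n),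
        v x + ((2 * Real.log ‖x‖ : ℝ) : EReal) < ((M + (1 / ε) * Real.log δ : ℝ) : EReal) :=
      hlim.eventually_lt_const (EReal.bot_lt_coe _)
    rw [eventually_nhdsWithin_iff, Metric.eventually_nhds_iff_ball] at h1
    obtain ⟨s, hs, hsb⟩ := h1
    refine ⟨s / 2, by positivity, fun x hx hxs hxr => ?_⟩
    have h2 := hsb x (by rw [mem_ball_zero_iff]; linarith) (hΩ x hx hxr)
    have h3 := hlow2 x
    have h4 := htop x (hΩ x hx hxr)
    generalize v x = a at h2 h4
    induction a with
    | bot => exact EReal.bot_lt_coe _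
    | top => exact absurd h4 (lt_irrefl _)
    | coe a =>
      rw [← EReal.coe_add, EReal.coe_lt_coe_iff] at h2
      rw [EReal.coe_lt_coe_iff]
      linarith
  -- compact annulus
  set C : Set (Euc n) := closedBall 0 r \ ball 0 (min s ‖x₁‖) with hC
  have hCc : IsCompact C := (isCompact_closedBall _ _).diff isOpen_ball
  have hx₁pos : 0 < ‖x₁‖ := norm_pos_iff.2 hx₁
  have hC0 : ∀ x ∈ C, x ≠ 0 ∧ ‖x‖ ≤ r := by
    intro x hx
    refine ⟨?_, by simpa using hx.1⟩
    rintro rfl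
    exact hx.2 (by simp [hs0, hx₁pos])
  have hx₁C : x₁ ∈ C := ⟨by simpa using hx₁r, by simp⟩
  have hCΩ : C ⊆ ball 0 1 \ {0} := fun x hx => hΩ x (hC0 x hx).1 (hC0 x hx).2
  have husc2 : UpperSemicontinuousOn (fun x => v x + ((- barr ε δ b x : ℝ) : EReal)) C := by
    apply UpperSemicontinuousOn.add'
    · exact fun x hx => (husc x (hCΩ hx)).mono hCΩ
    · apply ContinuousOn.upperSemicontinuousOn
      apply continuous_coe_real_ereal.comp_continuousOn
      intro x hx
      exact (barr_contDiffAt hδ b x (hC0 x hx).1 (hb x (hC0 x hx).2)).continuousAt.neg.continuousWithinAt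
    · intro x hx
      exact EReal.continuousAt_add (Or.inr (EReal.coe_ne_bot _)) (Or.inr (EReal.coe_ne_top _))
  obtain ⟨x₀, hx₀C, hmax⟩ := UpperSemicontinuousOn.exists_isMaxOn ⟨x₁, hx₁C⟩ hCc husc2
  have hgt : ((M : ℝ) : EReal) < v x₀ + ((- barr ε δ b x₀ : ℝ) : EReal) := by
    refine lt_of_lt_of_le ?_ (hmax hx₁C)
    simp only [ht]
    rw [← EReal.coe_add, EReal.coe_lt_coe_iff]
    linarith
  obtain ⟨hx₀, hx₀r⟩ := hC0 x₀ hx₀C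
  obtain ⟨t₀, ht₀⟩ : ∃ t₀ : ℝ, v x₀ = (t₀ : EReal) := by
    refine ⟨(v x₀).toReal, (EReal.coe_toReal (htop x₀ (hΩ x₀ hx₀ hx₀r)).ne ?_).symm⟩
    intro h
    rw [h, EReal.bot_add] at hgt
    exact not_lt_bot hgt
  rw [ht₀, ← EReal.coe_add, EReal.coe_lt_coe_iff] at hgt
  -- x₀ is interior
  have hlt : ‖x₀‖ < r := by
    refine lt_of_le_of_ne hx₀r fun h => ?_
    have h1 := hbd x₀ h
    rw [ht₀, EReal.coe_le_coe_iff] at h1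
    have := hlow1 x₀
    linarith
  have hgs : s < ‖x₀‖ := by
    by_contra h
    push Not at h
    have h1 := hs x₀ hx₀ h hx₀r
    rw [ht₀, EReal.coe_lt_coe_iff] at h1
    linarith
  have hev : ∀ᶠ x in 𝓝 x₀, x ∈ C := by
    have h1 : ∀ᶠ x in 𝓝 x₀, ‖x‖ < r := continuous_norm.continuousAt.eventually_lt_const hlt
    have h2 : ∀ᶠ x in 𝓝 x₀, s < ‖x‖ := continuous_norm.continuousAt.eventually_const_lt hgs
    filter_upwards [h1, h2] with x h1 h2
    refine ⟨by simpa using h1.le, ?_⟩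
    rw [mem_ball_zero_iff, not_lt]
    exact (min_le_left _ _).trans h2.le
  refine no_touch hn Γ hΓ hε hδ hmem _ v hsub b x₀ (hΩ x₀ hx₀ hx₀r) hx₀ (hb x₀ hx₀r)
    (t₀ - barr ε δ b x₀) (by rw [ht₀]; congr 1; ring) ?_
  filter_upwards [hev.filter_mono nhdsWithin_le_nhds] with x hxC
  have h1 : v x + ((- barr ε δ b x : ℝ) : EReal) ≤ v x₀ + ((- barr ε δ b x₀ : ℝ) : EReal) := hmax hxC
  have h4 := htop x (hCΩ hxC)
  rw [ht₀, ← EReal.coe_add] at h1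
  generalize v x = a at h1 h4
  induction a with
  | bot => exact bot_le
  | top => exact absurd h4 (lt_irrefl _)
  | coe a =>
    rw [← EReal.coe_add, EReal.coe_le_coe_iff] at h1
    rw [EReal.coe_le_coe_iff]
    linarith

/-- **Criterion for upperconical behaviour** (Proposition 4.8): for a cone `Γ` satisfying
condition (C) with `-λ* ∈ Γ`, any viscosity subsolution `v` of `λ(A[v]) ∈ ∂Γ` in `B ∖ {0}`
with `v(x) + 2 log|x| → -∞` as `x → 0` satisfies `limsup_{x→0} v < +∞`; moreover, after
setting `v(0) := limsup_{x→0} v` (possibly `-∞`), `v` is upper semi-continuous on `B` and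
upperconical at `0`. -/
theorem upperconical_criterion
    {n : ℕ} (hn : 2 ≤ n) (Γ : Set (Fin n → ℝ)) (hΓ : CondC Γ)
    (hstar : (fun i => -(lamStar n i)) ∈ Γ)
    (B : Set (Euc n)) (hB : B = Metric.ball (0 : Euc n) 1)
    (v : Euc n → EReal) (husc : UpperSemicontinuousOn v (B \ {0}))
    (htop : ∀ x ∈ B \ {0}, v x < ⊤) (hnebot : ∃ x ∈ B \ {0}, v x ≠ ⊥)
    (hsub : SubsolE Γ (B \ {0}) v)
    (hlim : Filter.Tendsto (fun x => v x + ((2 * Real.log ‖x‖ : ℝ) : EReal))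
      (𝓝[B \ {0}] (0 : Euc n)) (𝓝 (⊥ : EReal)))
    (w : Euc n → EReal)
    (hw : w = fun x => if x = (0 : Euc n) then
      Filter.limsup v (𝓝[B \ {0}] (0 : Euc n)) else v x) :
    Filter.limsup v (𝓝[B \ {0}] (0 : Euc n)) < ⊤ ∧
      UpperSemicontinuousOn w B ∧ UpperConical B w 0 := by
  subst hB
  -- choose ε
  obtain ⟨ε, hε, hmem⟩ : ∃ ε : ℝ, 0 < ε ∧
      (fun i : Fin n => if i.val = 0 then -1 - 2 * ε else (1 : ℝ)) ∈ Γ := by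
    have hopen : IsOpen Γ := hΓ.2.2.1
    have hcont : Continuous (fun ε : ℝ => (fun i : Fin n => if i.val = 0 then -1 - 2 * ε else (1 : ℝ))) := by
      refine continuous_pi fun i => ?_
      by_cases h : i.val = 0
      · simp only [h, if_true]; fun_prop
      · simp only [h, if_false]; fun_prop
    have h0 : (fun i : Fin n => if i.val = 0 then -1 - 2 * (0 : ℝ) else (1 : ℝ)) ∈ Γ := by
      convert hstar using 2 with i
      unfold lamStar
      by_cases h : i.val = 0 <;> simp [h]
    have hev : ∀ᶠ ε in 𝓝 (0 : ℝ),
        (fun i : Fin n => if i.val = 0 then -1 - 2 * ε else (1 : ℝ)) ∈ Γ :=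
      hcont.continuousAt.eventually_mem (hopen.mem_nhds h0)
    have hev2 : ∀ᶠ ε in 𝓝[>] (0 : ℝ),
        (fun i : Fin n => if i.val = 0 then -1 - 2 * ε else (1 : ℝ)) ∈ Γ :=
      hev.filter_mono nhdsWithin_le_nhds
    obtain ⟨ε, h1, h2⟩ := (hev2.and self_mem_nhdsWithin).exists
    exact ⟨ε, h2, h1⟩
  have key := fun b r hr0 hr1 hbr M hbd =>
    key_comparison hn Γ hΓ hε hmem v husc htop hsub hlim b r hr0 hr1 hbr M hbd
  -- boundedness
  have hlt : Filter.limsup v (𝓝[ball 0 1 \ {0}] (0 : Euc n)) < ⊤ := by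
    have hsph : sphere (0 : Euc n) (1 / 2) ⊆ ball 0 1 \ {0} := by
      intro x hx
      rw [mem_sphere_zero_iff_norm] at hx
      refine ⟨by rw [mem_ball_zero_iff]; linarith, ?_⟩
      rintro rfl
      norm_num at hx
    have hne : (sphere (0 : Euc n) (1 / 2)).Nonempty := by
      refine ⟨EuclideanSpace.single ⟨0, by omega⟩ (1 / 2), ?_⟩
      rw [mem_sphere_zero_iff_norm]
      simp
    obtain ⟨a, ha, hmax⟩ := UpperSemicontinuousOn.exists_isMaxOn hne (isCompact_sphere _ _)
      (fun x hx => (husc x (hsph hx)).mono hsph)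
    obtain ⟨M, hM⟩ : ∃ M : ℝ, v a ≤ (M : EReal) := by
      have h := htop a (hsph ha)
      obtain ⟨M, hM, -⟩ := EReal.lt_iff_exists_real_btwn.1 h
      exact ⟨M, hM.le⟩
    have hk := key 0 (1 / 2) (by norm_num) (by norm_num) (by simp) M (by
      intro x hx
      have : v x ≤ v a := hmax (mem_sphere_zero_iff_norm.2 hx)
      refine this.trans ?_
      simpa [quadF] using hM)
    refine lt_of_le_of_lt (b := (M : EReal)) ?_ (EReal.coe_lt_top M)
    refine Filter.limsup_le_of_le (by isBoundedDefault) ?_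
    have h1 : ∀ᶠ x in 𝓝[ball 0 1 \ {0}] (0 : Euc n), x ∈ ball (0 : Euc n) (1 / 2) :=
      nhdsWithin_le_nhds (ball_mem_nhds _ (by norm_num))
    filter_upwards [h1, self_mem_nhdsWithin] with x hx1 hx2
    have := hk x hx2.2 (mem_ball_zero_iff.1 hx1).le
    simpa [quadF] using this
  have hw0 : w 0 = Filter.limsup v (𝓝[ball 0 1 \ {0}] (0 : Euc n)) := by rw [hw]; simp
  have hwx : ∀ x, x ≠ 0 → w x = v x := fun x hx => by rw [hw]; simp [hx]
  refine ⟨hlt, ?_, ?_⟩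
  · intro x hx y hy
    by_cases hx0 : x = 0
    · subst hx0
      have h1 : ∀ᶠ z in 𝓝[ball 0 1 \ {0}] (0 : Euc n), v z < y :=
        Filter.eventually_lt_of_limsup_lt (hw0 ▸ hy) (by isBoundedDefault)
      rw [eventually_nhdsWithin_iff] at h1 ⊢
      filter_upwards [h1] with z hz hzB
      by_cases hz0 : z = 0
      · rw [hz0]; exact hy
      · rw [hwx z hz0]; exact hz ⟨hzB, hz0⟩
    · rw [hwx x hx0] at hy
      have h1 := husc x ⟨hx, hx0⟩ y hy
      rw [eventually_nhdsWithin_iff] at h1 ⊢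
      filter_upwards [h1, isOpen_ne.mem_nhds hx0] with z hz hz0 hzB
      rw [hwx z hz0]
      exact hz ⟨hzB, hz0⟩
  · unfold UpperConical LowerConical
    by_cases hbot : w 0 = ⊥
    · left; simp [hbot]
    right
    refine ⟨by simpa using hbot, ?_⟩
    intro e he η hη
    by_contra hcon
    push Not at hcon
    obtain ⟨L, hL⟩ : ∃ L : ℝ, w 0 = (L : EReal) :=
      ⟨(w 0).toReal, (EReal.coe_toReal (by rw [hw0]; exact hlt.ne) hbot).symm⟩
    have hupper : ∀ x ∈ ball (0 : Euc n) 1 \ {0},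
        v x ≤ ((L - η x + η 0 - e * ‖x‖ : ℝ) : EReal) := by
      intro x hx
      have h1 := hcon x hx.1
      have h2 := htop x hx
      rw [hL, hwx x hx.2, sub_zero] at h1
      generalize v x = a at h1 h2
      induction a with
      | bot => exact bot_le
      | top => exact absurd h2 (lt_irrefl _)
      | coe a =>
        rw [← EReal.coe_neg, ← EReal.coe_neg, ← EReal.coe_sub, ← EReal.coe_sub, ← EReal.coe_add,
          EReal.coe_le_coe_iff] at h1
        rw [EReal.coe_le_coe_iff]
        linarith
    -- choose b
    have hηd : HasFDerivAt η (fderiv ℝ η 0) 0 :=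
      (hη.differentiable (by simp) 0).hasFDerivAt
    set b : Euc n := (1 / 2 : ℝ) • (InnerProductSpace.toDual ℝ (Euc n)).symm (fderiv ℝ η 0) with hb
    have hbi : ∀ x, (inner ℝ b x : ℝ) = fderiv ℝ η 0 x / 2 := by
      intro x
      rw [hb, real_inner_smul_left, InnerProductSpace.toDual_symm_apply]
      ring
    have hD0 : quadF b 1 (‖b‖ ^ 2) 0 = 1 := by simp [quadF]
    have hDd := (quadF_hasFDerivAt b 1 (‖b‖ ^ 2) 0).log (by rw [hD0]; norm_num)
    have hgd : HasFDerivAt (fun x => Real.log (quadF b 1 (‖b‖ ^ 2) x) - η x)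
        (0 : Euc n →L[ℝ] ℝ) 0 := by
      have h := hDd.fun_sub hηd
      refine h.congr_fderiv (ContinuousLinearMap.ext fun x => ?_)
      simp [hD0, hbi]
      ring
    have hsmall : ∀ᶠ x in 𝓝 (0 : Euc n),
        Real.log (quadF b 1 (‖b‖ ^ 2) x) - η x + η 0 ≤ e / 2 * ‖x‖ := by
      have h := hgd.isLittleO.bound (half_pos he)
      filter_upwards [h] with x hx
      simp only [hD0, Real.log_one, _root_.zero_apply, sub_zero] at hx
      have := (abs_le.1 hx).2
      linarith
    obtain ⟨s, hs, hsb⟩ := Metric.eventually_nhds_iff_ball.1 hsmall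
    obtain ⟨r, hr0, hr1, hrs, hbr⟩ : ∃ r : ℝ, 0 < r ∧ r < 1 ∧ r < s ∧ ‖b‖ * r < 1 := by
      have hpos : 0 < 1 / (‖b‖ + 1) := by positivity
      refine ⟨min (min (1 / 2) (s / 2)) (1 / (‖b‖ + 1)), by positivity, ?_, ?_, ?_⟩
      · exact lt_of_le_of_lt ((min_le_left _ _).trans (min_le_left _ _)) (by norm_num)
      · exact lt_of_le_of_lt ((min_le_left _ _).trans (min_le_right _ _)) (by linarith)
      · refine lt_of_le_of_lt (mul_le_mul_of_nonneg_left (min_le_right _ _) (norm_nonneg b)) ?_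
        rw [mul_one_div, div_lt_one (by positivity)]
        linarith
    have hk := key b r hr0 hr1 hbr (L - e / 2 * r) (by
      intro x hx
      have hx0 : x ≠ 0 := by
        rintro rfl
        simp at hx
        linarith
      refine (hupper x ⟨by rw [mem_ball_zero_iff]; linarith, hx0⟩).trans ?_
      rw [EReal.coe_le_coe_iff]
      have := hsb x (by rw [mem_ball_zero_iff]; linarith)
      rw [hx] at this ⊢
      linarith)
    have hlog : ∀ᶠ x in 𝓝 (0 : Euc n), -(e / 4 * r) < Real.log (quadF b 1 (‖b‖ ^ 2) x) := by
      refine hDd.continuousAt.eventually_const_lt ?_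
      simp only [hD0, Real.log_one]
      have : 0 < e / 4 * r := by positivity
      linarith
    have hle : Filter.limsup v (𝓝[ball 0 1 \ {0}] (0 : Euc n)) ≤ ((L - e / 4 * r : ℝ) : EReal) := by
      refine Filter.limsup_le_of_le (by isBoundedDefault) ?_
      have h1 : ∀ᶠ x in 𝓝[ball 0 1 \ {0}] (0 : Euc n), x ∈ ball (0 : Euc n) r :=
        nhdsWithin_le_nhds (ball_mem_nhds _ hr0)
      filter_upwards [h1, self_mem_nhdsWithin, hlog.filter_mono nhdsWithin_le_nhds] with x hx1 hx2 hx3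
      refine (hk x hx2.2 (mem_ball_zero_iff.1 hx1).le).trans ?_
      rw [EReal.coe_le_coe_iff]
      linarith
    rw [← hw0, hL, EReal.coe_le_coe_iff] at hle
    have : 0 < e / 4 * r := by positivity
    linarith
end
end

section
/- Let n ≥ 2, let Γ ⊂ ℝⁿ satisfy condition (C) with λ* = (1,−1,…,−1) ∈ Γ, and let R > 0. (a) If v is an upper semi-continuous radially symmetric function (v(x) = v(|x|)) on {|x| > R} satisfying λ(A[v]) ∈ ℝⁿ∖Γ there in the viscosity sense, then r ↦ v(r) is non-increasing on (R,∞). (b) If v is an upper semi-continuous radially symmetric function on {0 < |x| < R} satisfying λ(A[v]) ∈ ℝⁿ∖Γ there in the viscosity sense, then r ↦ v(r) + 2·log r is non-decreasing on (0,R). -/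
open Filter Topology MeasureTheory Metric Set
open scoped BigOperators ENNReal NNReal

noncomputable section

/-- The eigenvalues of `α I + β x xᵀ`. -/
lemma eig_rank_one_s14 {n : ℕ} (Γ : Set (Fin n → ℝ)) (hn : 2 ≤ n)
    (hperm : ∀ σ : Equiv.Perm (Fin n), ∀ lam ∈ Γ, lam ∘ σ ∈ Γ)
    (M : Matrix (Fin n) (Fin n) ℝ) (hM : M.IsHermitian) (x : Fin n → ℝ) (α β q : ℝ)
    (hq : ∑ i, x i ^ 2 = q)
    (hMe : ∀ i j, M i j = α * (if i = j then (1 : ℝ) else 0) + β * (x i * x j))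
    (hβ : β * q ≠ 0)
    (hG : (fun i : Fin n => if i.val = 0 then α + β * q else α) ∈ Γ) :
    hM.eigenvalues ∈ Γ := by
  have key : ∀ j, hM.eigenvalues j = α ∨ hM.eigenvalues j = α + β * q := by
    intro j
    have h := hM.mulVec_eigenvectorBasis j
    set u : Fin n → ℝ := (hM.eigenvectorBasis j).ofLp with hu
    set l := hM.eigenvalues j with hl
    have hne : hM.eigenvectorBasis j ≠ 0 := hM.eigenvectorBasis.orthonormal.ne_zero j
    have hcomp : ∀ i, α * u i + β * x i * (∑ k, x k * u k) = l * u i := by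
      intro i
      have hi := congrFun h i
      simp only [Matrix.mulVec, dotProduct, hMe] at hi
      simp only [Pi.smul_apply, smul_eq_mul, add_mul, Finset.sum_add_distrib] at hi
      rw [← hi, Finset.mul_sum]
      congr 1
      · simp
      · exact Finset.sum_congr rfl fun k _ => by ring
    by_cases hs : (∑ k, x k * u k) = 0
    · left
      obtain ⟨i, hi⟩ : ∃ i, u i ≠ 0 := by
        by_contra hcon
        push Not at hcon
        apply hne
        ext i
        simpa using hcon i
      have := hcomp i
      rw [hs] at this
      apply mul_right_cancel₀ hi
      linarith
    · right
      have h2 : ∑ i, x i * (α * u i + β * x i * (∑ k, x k * u k)) = ∑ i, x i * (l * u i) :=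
        Finset.sum_congr rfl fun i _ => by rw [hcomp]
      have e1 : ∑ i, x i * (α * u i + β * x i * (∑ k, x k * u k))
          = (α + β * q) * (∑ k, x k * u k) := by
        rw [← hq, add_mul, Finset.mul_sum, mul_assoc, mul_comm (∑ i, x i ^ 2), Finset.mul_sum,
          Finset.mul_sum, ← Finset.sum_add_distrib]
        exact Finset.sum_congr rfl fun i _ => by ring
      have e2 : ∑ i, x i * (l * u i) = l * (∑ k, x k * u k) := by
        rw [Finset.mul_sum]
        exact Finset.sum_congr rfl fun i _ => by ring
      rw [e1, e2] at h2
      exact (mul_right_cancel₀ hs h2).symm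
  have htr : ∑ j, (hM.eigenvalues j - α) = β * q := by
    have h := hM.trace_eq_sum_eigenvalues
    have h2 : M.trace = n * α + β * q := by
      simp only [Matrix.trace, Matrix.diag_apply, hMe, Finset.sum_add_distrib, ← hq,
        Finset.mul_sum]
      simp [pow_two]
    rw [Finset.sum_sub_distrib]
    simp only [RCLike.ofReal_real_eq_id, id] at h
    rw [← h, h2]
    simp
  classical
  have hcard : ((Finset.univ.filter fun j => hM.eigenvalues j = α + β * q).card : ℝ) = 1 := by
    have : ∑ j, (hM.eigenvalues j - α)
        = ∑ j, if hM.eigenvalues j = α + β * q then β * q else 0 := by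
      apply Finset.sum_congr rfl
      intro j _
      split_ifs with hj
      · rw [hj]; ring
      · rcases key j with h | h
        · rw [h]; ring
        · exact absurd h hj
    rw [htr, ← Finset.sum_filter, Finset.sum_const, nsmul_eq_mul] at this
    apply mul_right_cancel₀ hβ
    linarith
  have hc : (Finset.univ.filter fun j => hM.eigenvalues j = α + β * q).card = 1 := by
    exact_mod_cast hcard
  obtain ⟨j0, hj0⟩ := Finset.card_eq_one.1 hc
  have hz : 0 < n := by omega
  have := hperm (Equiv.swap j0 ⟨0, hz⟩) _ hG
  convert this using 1
  ext j
  have hj : j = j0 ↔ hM.eigenvalues j = α + β * q := by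
    have : j ∈ (Finset.univ.filter fun j => hM.eigenvalues j = α + β * q) ↔ j ∈ ({j0} : Finset _) := by
      rw [hj0]
    simpa using this.symm
  have hv : ((Equiv.swap j0 ⟨0, hz⟩ j).val = 0) ↔ j = j0 := by
    rw [← Equiv.apply_eq_iff_eq (Equiv.swap j0 (⟨0, hz⟩ : Fin n)), Equiv.swap_apply_left, Fin.ext_iff]
  simp only [Function.comp]
  by_cases hjj : j = j0
  · rw [if_pos (hv.2 hjj)]; exact hj.1 hjj
  · rw [if_neg (fun h => hjj (hv.1 h))]
    rcases key j with h | h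
    · exact h
    · exact absurd (hj.2 h) hjj

/-- The one-variable profile and its derivatives. -/
lemma profile_d1 (A B C κ q : ℝ) (hκ : κ ≠ 0) (hq : 0 < q) (hW : 0 < A + B * q ^ κ) :
    HasDerivAt (fun q : ℝ => C - (1 / κ) * Real.log (A + B * q ^ κ))
      (-(B * q ^ (κ - 1) / (A + B * q ^ κ))) q := by
  have h1 : HasDerivAt (fun q : ℝ => A + B * q ^ κ) (B * (κ * q ^ (κ - 1))) q :=
    ((Real.hasDerivAt_rpow_const (Or.inl hq.ne')).const_mul B).const_add A
  have h2 := ((h1.log hW.ne').const_mul (1 / κ)).const_sub C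
  refine h2.congr_deriv ?_
  have hW' := hW.ne'
  field_simp

lemma profile_d2 (A B κ q : ℝ) (hq : 0 < q) (hW : 0 < A + B * q ^ κ) :
    HasDerivAt (fun q : ℝ => -(B * q ^ (κ - 1) / (A + B * q ^ κ)))
      (-((B * ((κ - 1) * q ^ (κ - 2)) * (A + B * q ^ κ)
        - B * q ^ (κ - 1) * (B * (κ * q ^ (κ - 1)))) / (A + B * q ^ κ) ^ 2)) q := by
  have h1 : HasDerivAt (fun q : ℝ => A + B * q ^ κ) (B * (κ * q ^ (κ - 1))) q :=
    ((Real.hasDerivAt_rpow_const (Or.inl hq.ne')).const_mul B).const_add A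
  have h0 : HasDerivAt (fun q : ℝ => B * q ^ (κ - 1)) (B * ((κ - 1) * q ^ (κ - 2))) q := by
    have := (Real.hasDerivAt_rpow_const (p := κ - 1) (Or.inl hq.ne')).const_mul B
    rwa [show κ - 1 - 1 = κ - 2 by ring] at this
  exact (h0.div h1 hW.ne').neg

/-- Localising a `C²` function. -/
lemma exists_global {n : ℕ} (φ₀ : Euc n → ℝ) (x₀ : Euc n)
    (h : ∀ᶠ x in 𝓝 x₀, ContDiffAt ℝ 2 φ₀ x) :
    ∃ φ : Euc n → ℝ, ContDiff ℝ 2 φ ∧ φ =ᶠ[𝓝 x₀] φ₀ := by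
  obtain ⟨ε, hε, hb⟩ := Metric.eventually_nhds_iff_ball.1 h
  let χ : ContDiffBump x₀ := ⟨ε / 4, ε / 2, by linarith, by linarith⟩
  refine ⟨fun x => χ x * φ₀ x, ?_, ?_⟩
  · rw [contDiff_iff_contDiffAt]
    intro x
    by_cases hx : x ∈ ball x₀ ε
    · exact χ.contDiffAt.mul (hb x hx)
    · have : x ∉ tsupport χ := by
        rw [χ.tsupport_eq]
        intro hx'
        apply hx
        rw [mem_closedBall] at hx'
        rw [mem_ball]
        have : χ.rOut = ε / 2 := rfl
        linarith
      have h0 := notMem_tsupport_iff_eventuallyEq.1 this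
      have : (fun x => χ x * φ₀ x) =ᶠ[𝓝 x] fun _ => 0 := by
        filter_upwards [h0] with y hy
        simp [hy]
      exact contDiffAt_const.congr_of_eventuallyEq this
  · filter_upwards [χ.eventuallyEq_one] with y hy
    simp [hy]

/-- The radial test function. -/
def testFn {n : ℕ} (A B C κ : ℝ) (x : Euc n) : ℝ :=
  C - (1 / κ) * Real.log (A + B * (‖x‖ ^ 2) ^ κ)

lemma hasFDerivAt_radial {n : ℕ} (g : ℝ → ℝ) (g' : ℝ) (x : Euc n)
    (hg : HasDerivAt g g' (‖x‖ ^ 2)) :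
    HasFDerivAt (fun y : Euc n => g (‖y‖ ^ 2)) (g' • (2 • innerSL ℝ x)) x :=
  hg.comp_hasFDerivAt x (hasStrictFDerivAt_norm_sq x).hasFDerivAt

lemma continuous_W {n : ℕ} (A B κ : ℝ) (hκ : 0 < κ) :
    Continuous (fun x : Euc n => A + B * (‖x‖ ^ 2) ^ κ) := by
  have : Continuous (fun x : Euc n => (‖x‖ ^ 2) ^ κ) :=
    (continuous_norm.pow 2).rpow_const fun x => Or.inr hκ.le
  fun_prop

lemma eventually_W {n : ℕ} (A B κ : ℝ) (hκ : 0 < κ) (x₀ : Euc n) (hx : x₀ ≠ 0)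
    (hW : 0 < A + B * (‖x₀‖ ^ 2) ^ κ) :
    ∀ᶠ x : Euc n in 𝓝 x₀, x ≠ 0 ∧ 0 < A + B * (‖x‖ ^ 2) ^ κ :=
  (eventually_ne_nhds hx).and ((continuous_W A B κ hκ).continuousAt.eventually_const_lt hW)

lemma pgrad_testFn {n : ℕ} (A B C κ : ℝ) (hκ : 0 < κ) (x : Euc n) (hx : x ≠ 0)
    (hW : 0 < A + B * (‖x‖ ^ 2) ^ κ) (i : Fin n) :
    fderiv ℝ (testFn A B C κ) x (EuclideanSpace.single i 1) =
      -(B * (‖x‖ ^ 2) ^ (κ - 1) / (A + B * (‖x‖ ^ 2) ^ κ)) * (2 * x i) := by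
  have hq : 0 < ‖x‖ ^ 2 := by positivity
  have h := hasFDerivAt_radial _ _ x (profile_d1 A B C κ _ hκ.ne' hq hW)
  have h' : HasFDerivAt (testFn A B C κ) _ x := h
  rw [h'.fderiv]
  simp [EuclideanSpace.inner_single_right]

lemma fderiv_radial_mul {n : ℕ} (g : ℝ → ℝ) (g' : ℝ) (x : Euc n)
    (hg : HasDerivAt g g' (‖x‖ ^ 2)) (i j : Fin n) :
    fderiv ℝ (fun y : Euc n => g (‖y‖ ^ 2) * (2 * y j)) x (EuclideanSpace.single i 1) =
      g' * (4 * (x i * x j)) + g (‖x‖ ^ 2) * (2 * (if i = j then (1 : ℝ) else 0)) := by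
  have h := hasFDerivAt_radial g g' x hg
  have hc : HasFDerivAt (fun y : Euc n => 2 * y j)
      ((2 : ℝ) • (EuclideanSpace.proj j : Euc n →L[ℝ] ℝ)) x :=
    ((EuclideanSpace.proj j : Euc n →L[ℝ] ℝ).hasFDerivAt).const_mul 2
  have hm : HasFDerivAt (fun y : Euc n => g (‖y‖ ^ 2) * (2 * y j)) _ x := h.mul hc
  rw [hm.fderiv]
  simp [EuclideanSpace.inner_single_right, Pi.single_apply, eq_comm]
  ring

lemma phess_testFn {n : ℕ} (A B C κ : ℝ) (hκ : 0 < κ) (x : Euc n) (hx : x ≠ 0)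
    (hW : 0 < A + B * (‖x‖ ^ 2) ^ κ) (i j : Fin n) :
    phess (testFn A B C κ) x i j =
      -((B * ((κ - 1) * (‖x‖ ^ 2) ^ (κ - 2)) * (A + B * (‖x‖ ^ 2) ^ κ)
        - B * (‖x‖ ^ 2) ^ (κ - 1) * (B * (κ * (‖x‖ ^ 2) ^ (κ - 1)))) / (A + B * (‖x‖ ^ 2) ^ κ) ^ 2)
        * (4 * (x i * x j))
      + -(B * (‖x‖ ^ 2) ^ (κ - 1) / (A + B * (‖x‖ ^ 2) ^ κ)) * (2 * (if i = j then (1 : ℝ) else 0)) := by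
  have hq : 0 < ‖x‖ ^ 2 := by positivity
  have he : (fun y => fderiv ℝ (testFn A B C κ) y (EuclideanSpace.single j 1)) =ᶠ[𝓝 x]
      fun y : Euc n => -(B * (‖y‖ ^ 2) ^ (κ - 1) / (A + B * (‖y‖ ^ 2) ^ κ)) * (2 * y j) := by
    filter_upwards [eventually_W A B κ hκ x hx hW] with y hy
    exact pgrad_testFn A B C κ hκ y hy.1 hy.2 j
  unfold phess
  rw [he.fderiv_eq]
  exact fderiv_radial_mul _ _ x (profile_d2 A B κ _ hq hW) i j

lemma testFn_contDiffAt {n : ℕ} (A B C κ : ℝ) (x : Euc n) (hx : x ≠ 0)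
    (hW : 0 < A + B * (‖x‖ ^ 2) ^ κ) : ContDiffAt ℝ 2 (testFn A B C κ) x := by
  have hq : ‖x‖ ^ 2 ≠ 0 := by positivity
  unfold testFn
  have h1 : ContDiffAt ℝ 2 (fun x : Euc n => ‖x‖ ^ 2) x := (contDiff_norm_sq ℝ).contDiffAt
  have h2 : ContDiffAt ℝ 2 (fun x : Euc n => (‖x‖ ^ 2) ^ κ) x := h1.rpow_const_of_ne hq
  exact contDiffAt_const.sub (contDiffAt_const.mul
    ((contDiffAt_const.add (contDiffAt_const.mul h2)).log hW.ne'))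

/-- No function of the family `testFn` touches a subsolution from above. -/
lemma no_touch_s14 {n : ℕ} (hn : 2 ≤ n) (Γ : Set (Fin n → ℝ)) (hΓ : CondC Γ) (κ : ℝ) (hκ : 0 < κ)
    (hκΓ : (fun i : Fin n => if i.val = 0 then 1 - 2 * κ else -1) ∈ Γ)
    (hκ1 : κ < 1 / 2)
    (Ω : Set (Euc n)) (v : Euc n → EReal) (hv : SubsolE Γ Ω v)
    (A B C : ℝ) (hAB : A * B < 0) (x₀ : Euc n) (hx₀ : x₀ ∈ Ω) (hx : x₀ ≠ 0)
    (hW : 0 < A + B * (‖x₀‖ ^ 2) ^ κ)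
    (heq : ((testFn A B C κ x₀ : ℝ) : EReal) = v x₀)
    (hle : ∀ᶠ x in 𝓝[Ω] x₀, v x ≤ ((testFn A B C κ x : ℝ) : EReal)) : False := by
  obtain ⟨-, -, -, hperm, hcone, -⟩ := hΓ
  obtain ⟨φ, hφ, hφe⟩ := exists_global (testFn A B C κ) x₀ (by
    filter_upwards [eventually_W A B κ hκ x₀ hx hW] with y hy
    exact testFn_contDiffAt A B C κ y hy.1 hy.2)
  obtain ⟨hM, hE⟩ := hv x₀ hx₀ φ hφ (by rw [hφe.eq_of_nhds, heq]) (by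
    filter_upwards [hle, hφe.filter_mono nhdsWithin_le_nhds] with y h1 h2
    rw [h2]; exact h1)
  apply hE
  have hq : 0 < ‖x₀‖ ^ 2 := by positivity
  have hqs : ∑ i, x₀ i ^ 2 = ‖x₀‖ ^ 2 := by
    rw [EuclideanSpace.norm_sq_eq]; simp
  have hpg : ∀ i, pgrad φ x₀ i =
      -(B * (‖x₀‖ ^ 2) ^ (κ - 1) / (A + B * (‖x₀‖ ^ 2) ^ κ)) * (2 * x₀ i) := by
    intro i
    unfold pgrad
    rw [hφe.fderiv_eq]
    exact pgrad_testFn A B C κ hκ x₀ hx hW i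
  have hph : ∀ i j, phess φ x₀ i j = phess (testFn A B C κ) x₀ i j := by
    intro i j
    unfold phess
    have : (fun y => fderiv ℝ φ y (EuclideanSpace.single j 1)) =ᶠ[𝓝 x₀]
        (fun y => fderiv ℝ (testFn A B C κ) y (EuclideanSpace.single j 1)) := by
      filter_upwards [hφe.fderiv (𝕜 := ℝ)] with y hy
      rw [hy]
    rw [this.fderiv_eq]
  have hpow1 : (‖x₀‖ ^ 2) ^ (κ - 1) = (‖x₀‖ ^ 2) ^ κ / ‖x₀‖ ^ 2 := Real.rpow_sub_one hq.ne' κ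
  have hpow2 : (‖x₀‖ ^ 2) ^ (κ - 2) = (‖x₀‖ ^ 2) ^ κ / (‖x₀‖ ^ 2) ^ 2 := by
    rw [show κ - 2 = κ - 1 - 1 by ring, Real.rpow_sub_one hq.ne', hpow1]
    field_simp
  have hu : 0 < (‖x₀‖ ^ 2) ^ κ := Real.rpow_pos_of_pos hq κ
  have hsum : ∑ k, (pgrad φ x₀ k) ^ 2 =
      4 * (B * (‖x₀‖ ^ 2) ^ (κ - 1) / (A + B * (‖x₀‖ ^ 2) ^ κ)) ^ 2 * ‖x₀‖ ^ 2 := by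
    rw [← hqs, Finset.mul_sum]
    refine Finset.sum_congr rfl fun k _ => ?_
    rw [hpg, hqs]; ring
  have hph' := fun i j => (hph i j).trans (phess_testFn A B C κ hκ x₀ hx hW i j)
  rw [hpow1] at hpg hsum
  simp only [hpow1, hpow2] at hph'
  generalize (‖x₀‖ ^ 2) ^ κ = u at *
  generalize ‖x₀‖ ^ 2 = q at *
  set ex := Real.exp (-2 * φ x₀) with hex
  have hexp : 0 < ex := Real.exp_pos _
  have hP : 0 < -(2 * A * B * u) / (A + B * u) ^ 2 := by
    apply div_pos _ (by positivity)
    nlinarith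
  have hcoef : 0 < ex * (-(2 * A * B * u) / (A + B * u) ^ 2) / q := by positivity
  have hWne := hW.ne'
  refine eig_rank_one_s14 Γ hn hperm (mobius φ x₀) hM x₀
    (-(ex * (-(2 * A * B * u) / (A + B * u) ^ 2) / q))
    ((ex * (-(2 * A * B * u) / (A + B * u) ^ 2) / q) * (2 - 2 * κ) / q) q hqs ?_ ?_ ?_
  · intro i j
    simp only [mobius, Matrix.smul_apply, Matrix.of_apply, smul_eq_mul, hph', hsum, ← hex]
    simp only [hpg]
    field_simp
    ring
  · rw [div_mul_cancel₀ _ hq.ne']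
    exact (mul_pos hcoef (by linarith)).ne'
  · convert hcone _ hκΓ _ hcoef using 1
    ext i
    simp only [Pi.smul_apply, smul_eq_mul]
    split_ifs
    · field_simp
      ring
    · ring

lemma logW_pos (κ W : ℝ) (hW : 0 < W) :
    ENNReal.log (ENNReal.ofReal (W ^ (1 / κ))) = ((1 / κ * Real.log W : ℝ) : EReal) := by
  rw [ENNReal.log_ofReal_of_pos (Real.rpow_pos_of_pos hW _), Real.log_rpow hW]

lemma logW_zero (κ : ℝ) (hκ : 0 < κ) :
    ENNReal.log (ENNReal.ofReal ((0 : ℝ) ^ (1 / κ))) = ⊥ := by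
  rw [Real.zero_rpow (by positivity)]; simp

/-- Maximum argument: `v + (1/κ) log W` cannot have an interior maximum. -/
lemma no_max {n : ℕ} (hn : 2 ≤ n) (Γ : Set (Fin n → ℝ)) (hΓ : CondC Γ) (κ : ℝ) (hκ : 0 < κ)
    (hκΓ : (fun i : Fin n => if i.val = 0 then 1 - 2 * κ else -1) ∈ Γ)
    (hκ1 : κ < 1 / 2)
    (Ω : Set (Euc n)) (v : Euc n → EReal) (hv : SubsolE Γ Ω v)
    (husc : UpperSemicontinuousOn v Ω) (htop : ∀ x ∈ Ω, v x < ⊤)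
    (A B : ℝ) (hAB : A * B < 0) (K U : Set (Euc n)) (hK : IsCompact K) (hU : IsOpen U)
    (hUK : U ⊆ K) (hKΩ : K ⊆ Ω) (h0 : ∀ x ∈ K, x ≠ 0)
    (hWU : ∀ x ∈ U, 0 < A + B * (‖x‖ ^ 2) ^ κ)
    (y : Euc n) (hy : y ∈ K) (hWy : 0 < A + B * (‖y‖ ^ 2) ^ κ) (hvy : v y ≠ ⊥)
    (hbd : ∀ x ∈ K, x ∉ U →
      v x + ENNReal.log (ENNReal.ofReal ((A + B * (‖x‖ ^ 2) ^ κ) ^ (1 / κ))) <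
      v y + ENNReal.log (ENNReal.ofReal ((A + B * (‖y‖ ^ 2) ^ κ) ^ (1 / κ)))) : False := by
  have hcont : Continuous (fun x : Euc n =>
      ENNReal.log (ENNReal.ofReal ((A + B * (‖x‖ ^ 2) ^ κ) ^ (1 / κ)))) :=
    ENNReal.continuous_log.comp (ENNReal.continuous_ofReal.comp
      ((continuous_W A B κ hκ).rpow_const fun x => Or.inr (by positivity)))
  have hF : UpperSemicontinuousOn (fun x : Euc n => v x +
      ENNReal.log (ENNReal.ofReal ((A + B * (‖x‖ ^ 2) ^ κ) ^ (1 / κ)))) K := by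
    apply (husc.mono hKΩ).add' (hcont.upperSemicontinuous.upperSemicontinuousOn K)
    intro x hx
    apply EReal.continuousAt_add
    · exact Or.inl (htop x (hKΩ hx)).ne
    · right
      rw [Ne, ENNReal.log_eq_top_iff]
      exact ENNReal.ofReal_ne_top
  obtain ⟨x₀, hx₀K, hmax⟩ := hF.exists_isMaxOn ⟨y, hy⟩ hK
  have hx₀U : x₀ ∈ U := by
    by_contra hcon
    exact absurd (hmax hy) (not_le.2 (hbd x₀ hx₀K hcon))
  have hW0 := hWU x₀ hx₀U
  have hv0 : v x₀ ≠ ⊥ := by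
    intro hb
    have := hmax hy
    simp only [mem_ofPred_eq, hb, EReal.bot_add, le_bot_iff, logW_pos κ _ hWy] at this
    rw [EReal.add_eq_bot_iff] at this
    rcases this with h | h
    · exact hvy h
    · exact EReal.coe_ne_bot _ h
  have hc0 : ((v x₀).toReal : EReal) = v x₀ := EReal.coe_toReal (htop x₀ (hKΩ hx₀K)).ne hv0
  set c := (v x₀).toReal with hc
  refine no_touch_s14 hn Γ hΓ κ hκ hκΓ hκ1 Ω v hv A B
    (c + 1 / κ * Real.log (A + B * (‖x₀‖ ^ 2) ^ κ)) hAB x₀ (hKΩ hx₀K) (h0 x₀ hx₀K) hW0 ?_ ?_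
  · rw [← hc0]
    congr 1
    unfold testFn
    ring
  · filter_upwards [nhdsWithin_le_nhds (hU.mem_nhds hx₀U)] with x hxU
    have h := hmax (hUK hxU)
    simp only [mem_ofPred_eq, ← hc0, logW_pos κ _ hW0, logW_pos κ _ (hWU x hxU)] at h
    by_cases hvx : v x = ⊥
    · rw [hvx]; exact bot_le
    · have hcx : ((v x).toReal : EReal) = v x := EReal.coe_toReal (htop x (hKΩ (hUK hxU))).ne hvx
      rw [← hcx] at h ⊢
      unfold testFn
      norm_cast at h ⊢
      linarith

lemma exists_kappa {n : ℕ} (Γ : Set (Fin n → ℝ)) (hΓ : IsOpen Γ) (hstar : lamStar n ∈ Γ) :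
    ∃ κ : ℝ, 0 < κ ∧ κ < 1 / 2 ∧ (fun i : Fin n => if i.val = 0 then 1 - 2 * κ else -1) ∈ Γ := by
  have hc : Continuous (fun κ : ℝ => (fun i : Fin n => if i.val = 0 then 1 - 2 * κ else -1)) := by
    refine continuous_pi fun i => ?_
    split_ifs <;> fun_prop
  have h0 : ∀ᶠ κ : ℝ in 𝓝 0, (fun i : Fin n => if i.val = 0 then 1 - 2 * κ else -1) ∈ Γ := by
    apply hc.continuousAt.eventually_mem
    apply hΓ.mem_nhds
    convert hstar using 1
    ext i
    simp [lamStar]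
  have h1 : ∀ᶠ κ : ℝ in 𝓝[>] 0, 0 < κ ∧ κ < 1 / 2 ∧
      (fun i : Fin n => if i.val = 0 then 1 - 2 * κ else -1) ∈ Γ := by
    filter_upwards [self_mem_nhdsWithin, nhdsWithin_le_nhds h0,
      nhdsWithin_le_nhds (Iio_mem_nhds (show (0 : ℝ) < 1 / 2 by norm_num))] with κ a b c
    exact ⟨a, c, b⟩
  exact h1.exists

lemma isCompact_annulus {n : ℕ} (a b : ℝ) : IsCompact {x : Euc n | a ≤ ‖x‖ ∧ ‖x‖ ≤ b} := by
  apply (isCompact_closedBall (0 : Euc n) b).of_isClosed_subset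
  · exact (isClosed_le continuous_const continuous_norm).inter
      (isClosed_le continuous_norm continuous_const)
  · intro x hx
    simpa using hx.2

lemma isOpen_annulus {n : ℕ} (a b : ℝ) : IsOpen {x : Euc n | a < ‖x‖ ∧ ‖x‖ < b} :=
  (isOpen_lt continuous_const continuous_norm).inter (isOpen_lt continuous_norm continuous_const)

lemma sq_rpow_lt (κ : ℝ) (hκ : 0 < κ) (a b : ℝ) (ha : 0 ≤ a) (hab : a < b) :
    (a ^ 2) ^ κ < (b ^ 2) ^ κ :=
  Real.rpow_lt_rpow (by positivity) (by nlinarith) hκ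

lemma exists_sq_rpow (κ : ℝ) (hκ : 0 < κ) (D : ℝ) (hD : 0 < D) :
    ∃ ρ : ℝ, 0 < ρ ∧ (ρ ^ 2) ^ κ = D := by
  refine ⟨Real.sqrt (D ^ (1 / κ)), Real.sqrt_pos.2 (by positivity), ?_⟩
  rw [Real.sq_sqrt (by positivity), ← Real.rpow_mul hD.le, one_div_mul_cancel hκ.ne', Real.rpow_one]

lemma lt_of_sq_rpow_lt (κ : ℝ) (hκ : 0 < κ) (a b : ℝ) (hb : 0 ≤ b)
    (h : (a ^ 2) ^ κ < (b ^ 2) ^ κ) : a < b := by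
  have := (Real.rpow_lt_rpow_iff (by positivity) (by positivity) hκ).1 h
  exact lt_of_pow_lt_pow_left₀ 2 hb this

lemma log_compare (κ va vb X Y : ℝ) (hκ : 0 < κ) (hX : 0 < X) (hY : 0 < Y)
    (h : X < Real.exp (κ * (vb - va)) * Y) :
    va + 1 / κ * Real.log X < vb + 1 / κ * Real.log Y := by
  have h1 := Real.log_lt_log hX h
  rw [Real.log_mul (Real.exp_pos _).ne' hY.ne', Real.log_exp] at h1
  have h2 : 1 / κ * Real.log X < 1 / κ * (κ * (vb - va) + Real.log Y) :=
    mul_lt_mul_of_pos_left h1 (by positivity)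
  have h3 : 1 / κ * (κ * (vb - va) + Real.log Y) = vb - va + 1 / κ * Real.log Y := by
    field_simp
  linarith

lemma part_a {n : ℕ} (hn : 2 ≤ n) (Γ : Set (Fin n → ℝ)) (hΓ : CondC Γ)
    (hstar : lamStar n ∈ Γ) (R : ℝ) (hR : 0 < R) (v : Euc n → EReal)
    (husc : UpperSemicontinuousOn v {x : Euc n | R < ‖x‖})
    (htop : ∀ x : Euc n, R < ‖x‖ → v x < ⊤)
    (hrad : ∀ x y : Euc n, ‖x‖ = ‖y‖ → v x = v y)
    (hv : SubsolE Γ {x : Euc n | R < ‖x‖} v)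
    (x y : Euc n) (hx : R < ‖x‖) (hxy : ‖x‖ ≤ ‖y‖) : v y ≤ v x := by
  by_contra hcon
  rw [not_le] at hcon
  obtain ⟨κ, hκ, hκ1, hκΓ⟩ := exists_kappa Γ hΓ.2.2.1 hstar
  have hlt : ‖x‖ < ‖y‖ := by
    rcases hxy.lt_or_eq with h | h
    · exact h
    · rw [hrad x y h] at hcon
      exact absurd hcon (lt_irrefl _)
  have hαβ := sq_rpow_lt κ hκ ‖x‖ ‖y‖ (norm_nonneg _) hlt
  have hvy : v y ≠ ⊥ := (bot_le.trans_lt hcon).ne'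
  have hcy := EReal.coe_toReal (htop y (hx.trans hlt)).ne hvy
  have hβ0 : 0 ≤ (‖y‖ ^ 2) ^ κ := by positivity
  -- choice of `D`
  obtain ⟨D, hD, hcmp⟩ : ∃ D, (‖y‖ ^ 2) ^ κ < D ∧
      v x + ((1 / κ * Real.log (D - (‖x‖ ^ 2) ^ κ) : ℝ) : EReal) <
      v y + ((1 / κ * Real.log (D - (‖y‖ ^ 2) ^ κ) : ℝ) : EReal) := by
    by_cases hvx : v x = ⊥
    · refine ⟨(‖y‖ ^ 2) ^ κ + 1, by linarith, ?_⟩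
      rw [hvx, EReal.bot_add, ← hcy, ← EReal.coe_add]
      exact EReal.bot_lt_coe _
    · have hcx := EReal.coe_toReal (htop x hx).ne hvx
      rw [← hcx, ← hcy] at hcon ⊢
      norm_cast at hcon
      set va := (v x).toReal
      set vb := (v y).toReal
      set E := Real.exp (κ * (vb - va)) with hE
      have hE1 : 1 < E := Real.one_lt_exp_iff.2 (mul_pos hκ (by linarith))
      obtain ⟨D, hD⟩ := exists_gt
        (max ((‖y‖ ^ 2) ^ κ) ((E * (‖y‖ ^ 2) ^ κ - (‖x‖ ^ 2) ^ κ) / (E - 1)))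
      obtain ⟨hD1, hD2⟩ := max_lt_iff.1 hD
      refine ⟨D, hD1, ?_⟩
      rw [div_lt_iff₀ (by linarith)] at hD2
      rw [← EReal.coe_add, ← EReal.coe_add, EReal.coe_lt_coe_iff]
      apply log_compare κ va vb _ _ hκ (by linarith) (by linarith)
      rw [← hE]
      linarith
  obtain ⟨ρ, hρ, hρD⟩ := exists_sq_rpow κ hκ D (by linarith)
  have hyρ : ‖y‖ < ρ := lt_of_sq_rpow_lt κ hκ _ _ hρ.le (by rw [hρD]; exact hD)
  have hW : ∀ z : Euc n, D + (-1) * (‖z‖ ^ 2) ^ κ = D - (‖z‖ ^ 2) ^ κ := fun z => by ring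
  refine no_max hn Γ hΓ κ hκ hκΓ hκ1 _ v hv husc htop D (-1) (by linarith)
    {z | ‖x‖ ≤ ‖z‖ ∧ ‖z‖ ≤ ρ} {z | ‖x‖ < ‖z‖ ∧ ‖z‖ < ρ} (isCompact_annulus _ _)
    (isOpen_annulus _ _) (fun z hz => ⟨hz.1.le, hz.2.le⟩) (fun z hz => hx.trans_le hz.1)
    (fun z hz => norm_pos_iff.1 ((hR.trans hx).trans_le hz.1)) ?_ y ⟨hxy, hyρ.le⟩ ?_ hvy ?_
  · intro z hz
    have := sq_rpow_lt κ hκ ‖z‖ ρ (norm_nonneg _) hz.2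
    linarith
  · linarith
  · intro z hz hzU
    rw [hW, hW, logW_pos κ _ (show 0 < D - (‖y‖ ^ 2) ^ κ by linarith)]
    rcases hz.1.lt_or_eq with h | h
    · have hzρ : ‖z‖ = ρ := by
        by_contra hne
        exact hzU ⟨h, lt_of_le_of_ne hz.2 hne⟩
      rw [hzρ, hρD, sub_self, logW_zero κ hκ, EReal.add_bot, ← hcy, ← EReal.coe_add]
      exact EReal.bot_lt_coe _
    · rw [← hrad x z h, ← h, logW_pos κ _ (by linarith)]
      exact hcmp

lemma part_b {n : ℕ} (hn : 2 ≤ n) (Γ : Set (Fin n → ℝ)) (hΓ : CondC Γ)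
    (hstar : lamStar n ∈ Γ) (R : ℝ) (v : Euc n → EReal)
    (husc : UpperSemicontinuousOn v {x : Euc n | 0 < ‖x‖ ∧ ‖x‖ < R})
    (htop : ∀ x : Euc n, 0 < ‖x‖ → ‖x‖ < R → v x < ⊤)
    (hrad : ∀ x y : Euc n, ‖x‖ = ‖y‖ → v x = v y)
    (hv : SubsolE Γ {x : Euc n | 0 < ‖x‖ ∧ ‖x‖ < R} v)
    (x y : Euc n) (hx : 0 < ‖x‖) (hxy : ‖x‖ ≤ ‖y‖) (hy : ‖y‖ < R) :
    v x + ((2 * Real.log ‖x‖ : ℝ) : EReal) ≤ v y + ((2 * Real.log ‖y‖ : ℝ) : EReal) := by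
  by_contra hcon
  rw [not_le] at hcon
  obtain ⟨κ, hκ, hκ1, hκΓ⟩ := exists_kappa Γ hΓ.2.2.1 hstar
  have hlt : ‖x‖ < ‖y‖ := by
    rcases hxy.lt_or_eq with h | h
    · exact h
    · rw [hrad x y h, h] at hcon
      exact absurd hcon (lt_irrefl _)
  have hy0 : 0 < ‖y‖ := hx.trans hlt
  have hαβ := sq_rpow_lt κ hκ ‖x‖ ‖y‖ (norm_nonneg _) hlt
  have hvx : v x ≠ ⊥ := by
    intro h
    rw [h, EReal.bot_add] at hcon
    exact not_lt_bot hcon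
  have hcx := EReal.coe_toReal (htop x hx (hlt.trans hy)).ne hvx
  have hα0 : 0 < (‖x‖ ^ 2) ^ κ := by positivity
  have hβ0 : 0 < (‖y‖ ^ 2) ^ κ := by positivity
  obtain ⟨D, hD0, hD, hcmp⟩ : ∃ D, 0 < D ∧ 1 < D * (‖x‖ ^ 2) ^ κ ∧
      v y + ((1 / κ * Real.log (-1 + D * (‖y‖ ^ 2) ^ κ) : ℝ) : EReal) <
      v x + ((1 / κ * Real.log (-1 + D * (‖x‖ ^ 2) ^ κ) : ℝ) : EReal) := by
    by_cases hvy : v y = ⊥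
    · refine ⟨2 / (‖x‖ ^ 2) ^ κ, by positivity, ?_, ?_⟩
      · rw [div_mul_cancel₀ _ hα0.ne']; norm_num
      rw [hvy, EReal.bot_add, ← hcx, ← EReal.coe_add]
      exact EReal.bot_lt_coe _
    · have hcy := EReal.coe_toReal (htop y hy0 hy).ne hvy
      rw [← hcx, ← hcy] at hcon ⊢
      norm_cast at hcon
      set va := (v x).toReal
      set vb := (v y).toReal
      set E := Real.exp (κ * (va - vb)) with hE
      have hE1 : 0 < E * (‖x‖ ^ 2) ^ κ - (‖y‖ ^ 2) ^ κ := by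
        rw [sub_pos, hE, Real.rpow_def_of_pos (by positivity), Real.rpow_def_of_pos (by positivity),
          ← Real.exp_add, Real.exp_lt_exp, Real.log_pow, Real.log_pow]
        push_cast
        nlinarith
      obtain ⟨D, hD⟩ := exists_gt
        (max (1 / (‖x‖ ^ 2) ^ κ) ((E - 1) / (E * (‖x‖ ^ 2) ^ κ - (‖y‖ ^ 2) ^ κ)))
      obtain ⟨hD1, hD2⟩ := max_lt_iff.1 hD
      have hD0 : 0 < D := lt_trans (by positivity) hD1
      rw [div_lt_iff₀ hα0] at hD1
      rw [div_lt_iff₀ hE1] at hD2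
      refine ⟨D, hD0, hD1, ?_⟩
      have := mul_lt_mul_of_pos_left hαβ hD0
      rw [← EReal.coe_add, ← EReal.coe_add, EReal.coe_lt_coe_iff]
      apply log_compare κ vb va _ _ hκ (by linarith) (by linarith)
      rw [← hE]
      linarith
  obtain ⟨ρ, hρ, hρD⟩ := exists_sq_rpow κ hκ (1 / D) (by positivity)
  have hxρ : ρ < ‖x‖ := lt_of_sq_rpow_lt κ hκ _ _ hx.le (by
    rw [hρD, div_lt_iff₀ hD0]; linarith)
  have hWx : 0 < -1 + D * (‖x‖ ^ 2) ^ κ := by linarith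
  have hWy : 0 < -1 + D * (‖y‖ ^ 2) ^ κ := by
    have := mul_lt_mul_of_pos_left hαβ hD0
    linarith
  refine no_max hn Γ hΓ κ hκ hκΓ hκ1 _ v hv husc (fun z hz => htop z hz.1 hz.2) (-1) D (by linarith)
    {z | ρ ≤ ‖z‖ ∧ ‖z‖ ≤ ‖y‖} {z | ρ < ‖z‖ ∧ ‖z‖ < ‖y‖} (isCompact_annulus _ _)
    (isOpen_annulus _ _) (fun z hz => ⟨hz.1.le, hz.2.le⟩)
    (fun z hz => ⟨hρ.trans_le hz.1, hz.2.trans_lt hy⟩)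
    (fun z hz => norm_pos_iff.1 (hρ.trans_le hz.1)) ?_ x ⟨hxρ.le, hxy⟩ hWx hvx ?_
  · intro z hz
    have := sq_rpow_lt κ hκ ρ ‖z‖ hρ.le hz.1
    rw [hρD, div_lt_iff₀ hD0] at this
    linarith
  · intro z hz hzU
    rw [logW_pos κ _ hWx]
    rcases hz.2.lt_or_eq with h | h
    · have hzρ : ‖z‖ = ρ := by
        by_contra hne
        exact hzU ⟨lt_of_le_of_ne hz.1 (Ne.symm hne), h⟩
      rw [hzρ, hρD, mul_one_div_cancel hD0.ne', neg_add_cancel, logW_zero κ hκ, EReal.add_bot,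
        ← hcx, ← EReal.coe_add]
      exact EReal.bot_lt_coe _
    · rw [hrad z y h, h, logW_pos κ _ hWy]
      exact hcmp


/-- **Monotonicity of radial subsolutions when `λ* ∈ Γ`** (Lemma 6.3):
(a) an upper semi-continuous radially symmetric subsolution of `λ(A[v]) ∈ ∂Γ` on
`{|x| > R}` is non-increasing in `r`;
(b) an upper semi-continuous radially symmetric subsolution on `{0 < |x| < R}` has
`v + 2 log r` non-decreasing in `r`. -/
theorem radial_subsolution_monotone
    {n : ℕ} (hn : 2 ≤ n) (Γ : Set (Fin n → ℝ)) (hΓ : CondC Γ)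
    (hstar : lamStar n ∈ Γ) (R : ℝ) (hR : 0 < R) :
    (∀ v : Euc n → EReal,
      UpperSemicontinuousOn v {x : Euc n | R < ‖x‖} →
      (∀ x : Euc n, R < ‖x‖ → v x < ⊤) →
      (∃ x : Euc n, R < ‖x‖ ∧ v x ≠ ⊥) →
      (∀ x y : Euc n, ‖x‖ = ‖y‖ → v x = v y) →
      SubsolE Γ {x : Euc n | R < ‖x‖} v →
      ∀ x y : Euc n, R < ‖x‖ → ‖x‖ ≤ ‖y‖ → v y ≤ v x) ∧
    (∀ v : Euc n → EReal,
      UpperSemicontinuousOn v {x : Euc n | 0 < ‖x‖ ∧ ‖x‖ < R} →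
      (∀ x : Euc n, 0 < ‖x‖ → ‖x‖ < R → v x < ⊤) →
      (∃ x : Euc n, (0 < ‖x‖ ∧ ‖x‖ < R) ∧ v x ≠ ⊥) →
      (∀ x y : Euc n, ‖x‖ = ‖y‖ → v x = v y) →
      SubsolE Γ {x : Euc n | 0 < ‖x‖ ∧ ‖x‖ < R} v →
      ∀ x y : Euc n, 0 < ‖x‖ → ‖x‖ ≤ ‖y‖ → ‖y‖ < R →
        v x + ((2 * Real.log ‖x‖ : ℝ) : EReal) ≤
          v y + ((2 * Real.log ‖y‖ : ℝ) : EReal)) := by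

  refine ⟨?_, ?_⟩
  · intro v husc htop _ hrad hv x y hx hxy
    exact part_a hn Γ hΓ hstar R hR v husc htop hrad hv x y hx hxy
  · intro v husc htop _ hrad hv x y hx hxy hy
    exact part_b hn Γ hΓ hstar R v husc htop hrad hv x y hx hxy hy
end
end

section
/- Let n ≥ 2 and let v be a C¹ real-valued function defined in a neighborhood of 0 in ℝⁿ with p := ∇v(0) ≠ 0. Let λ ∈ ℝ∖{0}, let O be an n×n orthogonal matrix, set x̄ := (λ²/2)·Oᵀp (note x̄ ≠ 0), and define ψ(x) := O( λ²·(x − x̄)/|x − x̄|² + λ²·x̄/|x̄|² ) for x in a neighborhood of 0 not containing x̄. Then ψ(0) = 0 and the function v^ψ := v∘ψ + (1/n)·log|det Dψ| satisfies ∇v^ψ(0) = 0, where Dψ denotes the Jacobian matrix of ψ. -/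
open Filter Topology Metric Set
open scoped BigOperators

noncomputable section

/-- **Normalizing the gradient by a Möbius transformation** (Lemma 4.5): for a `C¹`
function `v` near `0` with `p = ∇v(0) ≠ 0`, the Möbius transformation
`ψ(x) = O(λ²(x - x̄)/|x - x̄|² + λ² x̄/|x̄|²)` with `x̄ = (λ²/2) Oᵀ p` satisfies `ψ(0) = 0`
and `∇v^ψ(0) = 0`, where `v^ψ = v ∘ ψ + (1/n) log |det Dψ|`. -/
theorem mobius_gradient_normalization
    {n : ℕ} (hn : 2 ≤ n)
    (v : Euc n → ℝ) (hv : ∃ U ∈ 𝓝 (0 : Euc n), ContDiffOn ℝ 1 v U)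
    (p : Euc n) (hp : p = gradient v 0) (hp0 : p ≠ 0)
    (lam : ℝ) (hlam : lam ≠ 0)
    (O : Matrix (Fin n) (Fin n) ℝ) (hO : O.transpose * O = 1)
    (xbar : Euc n)
    (hxbar : xbar = (lam ^ 2 / 2) • (Matrix.toEuclideanLin O.transpose p))
    (ψ : Euc n → Euc n)
    (hψ : ∀ x, ψ x = Matrix.toEuclideanLin O
      ((lam ^ 2 / ‖x - xbar‖ ^ 2) • (x - xbar) + (lam ^ 2 / ‖xbar‖ ^ 2) • xbar))
    (w : Euc n → ℝ)
    (hw : ∀ x, w x = v (ψ x) +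
      (1 / (n : ℝ)) * Real.log |LinearMap.det (fderiv ℝ ψ x : Euc n →ₗ[ℝ] Euc n)|) :
    ψ 0 = 0 ∧ xbar ≠ 0 ∧ gradient w 0 = 0 := by
  have hadj : ∀ (y : Euc n), inner ℝ p (Matrix.toEuclideanLin O y)
      = inner ℝ (Matrix.toEuclideanLin O.transpose p) y := by
    intro y
    have h := Matrix.toEuclideanLin_conjTranspose_eq_adjoint O
    rw [Matrix.conjTranspose_eq_transpose_of_trivial] at h
    rw [h, LinearMap.adjoint_inner_left]
  have hOO : O * O.transpose = 1 := mul_eq_one_comm.mp hO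
  have hLL : Matrix.toEuclideanLin O (Matrix.toEuclideanLin O.transpose p) = p := by
    simp [Matrix.toLpLin_apply, Matrix.mulVec_mulVec, hOO]
  have hq0 : Matrix.toEuclideanLin O.transpose p ≠ 0 := by
    intro h
    rw [h, map_zero] at hLL
    exact hp0 hLL.symm
  have hl2 : lam ^ 2 ≠ 0 := pow_ne_zero 2 hlam
  have hx0 : xbar ≠ 0 := by
    rw [hxbar]
    exact smul_ne_zero (div_ne_zero hl2 two_ne_zero) hq0
  have hψ0 : ψ 0 = 0 := by
    rw [hψ]
    simp
  refine ⟨hψ0, hx0, ?_⟩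
  have hnx : ‖xbar‖ ≠ 0 := norm_ne_zero_iff.mpr hx0
  have hn0 : (n : ℝ) ≠ 0 := by
    have : n ≠ 0 := by omega
    exact_mod_cast this
  set L : Euc n →L[ℝ] Euc n := (Matrix.toEuclideanLin O).toContinuousLinearMap with hL
  have hψd : ∀ x, x ≠ xbar → HasFDerivAt ψ
      (L ∘L ((lam / dist x xbar) ^ 2 • ((ℝ ∙ (x - xbar))ᗮ.reflection : Euc n →L[ℝ] Euc n))) x := by
    intro x hx
    have h1 := EuclideanGeometry.hasFDerivAt_inversion (R := lam) hx
    have h2 := L.hasFDerivAt.comp x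
      ((h1.sub_const xbar).add_const ((lam ^ 2 / ‖xbar‖ ^ 2) • xbar))
    refine h2.congr_of_eventuallyEq (Eventually.of_forall fun y => ?_)
    rw [hψ]
    simp [hL, EuclideanGeometry.inversion, dist_eq_norm, div_pow]
  have hdetO : |LinearMap.det (Matrix.toEuclideanLin O)| = 1 := by
    have h1 : LinearMap.det (Matrix.toEuclideanLin O) = O.det := by
      rw [Matrix.toEuclideanLin_eq_toLin, LinearMap.det_toLin]
    have h2 := congrArg Matrix.det hO
    rw [Matrix.det_mul, Matrix.det_transpose, Matrix.det_one] at h2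
    rw [h1]
    rcases mul_self_eq_one_iff.mp h2 with h | h <;> simp [h]
  have hlog : ∀ x, x ≠ xbar →
      (1 / (n : ℝ)) * Real.log |LinearMap.det (fderiv ℝ ψ x : Euc n →ₗ[ℝ] Euc n)|
      = Real.log (lam ^ 2) - Real.log (‖x - xbar‖ ^ 2) := by
    intro x hx
    have hxx : ‖x - xbar‖ ≠ 0 := norm_ne_zero_iff.mpr (sub_ne_zero.mpr hx)
    rw [(hψd x hx).fderiv]
    have e : ((L ∘L ((lam / dist x xbar) ^ 2 • ((ℝ ∙ (x - xbar))ᗮ.reflection : Euc n →L[ℝ] Euc n)) :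
        Euc n →L[ℝ] Euc n) : Euc n →ₗ[ℝ] Euc n)
        = (Matrix.toEuclideanLin O) ∘ₗ
          ((lam / dist x xbar) ^ 2 • (ℝ ∙ (x - xbar))ᗮ.reflection.toLinearMap) := by
      ext; rfl
    rw [e, LinearMap.det_comp, LinearMap.det_smul, Submodule.det_reflection, abs_mul, hdetO, abs_mul,
      abs_pow, abs_pow (-1 : ℝ)]
    simp only [finrank_euclideanSpace, Fintype.card_fin, abs_neg, abs_one, one_pow, mul_one, one_mul]
    rw [Real.log_pow, abs_of_nonneg (sq_nonneg _), dist_eq_norm, div_pow,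
      Real.log_div hl2 (pow_ne_zero 2 hxx)]
    field_simp
  obtain ⟨U, hU, hvU⟩ := hv
  have hvd : DifferentiableAt ℝ v 0 := (hvU.contDiffAt hU).differentiableAt (by norm_num)
  have hvg : HasFDerivAt v (InnerProductSpace.toDual ℝ (Euc n) p) (ψ 0) := by
    rw [hψ0, hp]
    exact hvd.hasGradientAt.hasFDerivAt
  have hA := hvg.comp (0 : Euc n) (hψd 0 hx0.symm)
  have hB := (((hasFDerivAt_id (𝕜 := ℝ) (0 : Euc n)).sub_const xbar).norm_sq.log
    (by simpa using hx0)).const_sub (Real.log (lam ^ 2))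
  have hC := hA.add hB
  have hW : HasFDerivAt w (0 : Euc n →L[ℝ] ℝ) 0 := by
    refine (hC.congr_of_eventuallyEq ?_).congr_fderiv ?_
    · filter_upwards [isOpen_ne.mem_nhds hx0.symm] with x hx
      rw [hw, hlog x hx]
      rfl
    · ext1 h
      have hR : inner ℝ xbar ((ℝ ∙ (0 - xbar))ᗮ.reflection h) = - inner ℝ xbar h := by
        have e : (ℝ ∙ (0 - xbar))ᗮ.reflection xbar = -xbar := by
          have h3 := Submodule.reflection_orthogonalComplement_singleton_eq_neg (𝕜 := ℝ) (0 - xbar)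
          have h4 : (ℝ ∙ (0 - xbar))ᗮ.reflection (0 - xbar)
              = - (ℝ ∙ (0 - xbar))ᗮ.reflection xbar := by
            rw [map_sub, map_zero, zero_sub]
          rw [h4] at h3
          rw [neg_injective h3, zero_sub]
        have := (ℝ ∙ (0 - xbar))ᗮ.reflection.inner_map_map xbar ((ℝ ∙ (0 - xbar))ᗮ.reflection h)
        rw [Submodule.reflection_reflection, e, inner_neg_left] at this
        exact this.symm
      have hq : Matrix.toEuclideanLin O.transpose p = (2 / lam ^ 2) • xbar := by
        rw [hxbar, smul_smul]
        field_simp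
        simp
      have h1 : inner ℝ p (L ((lam / dist 0 xbar) ^ 2 • (ℝ ∙ (0 - xbar))ᗮ.reflection h))
          = - (2 / ‖xbar‖ ^ 2 * inner ℝ xbar h) := by
        have := hadj ((lam / dist 0 xbar) ^ 2 • (ℝ ∙ (0 - xbar))ᗮ.reflection h)
        rw [hq, inner_smul_left, inner_smul_right, hR] at this
        refine this.trans ?_
        simp
        field_simp
      refine (congrArg₂ (· + ·) h1 rfl).trans ?_
      simp
      field_simp
      ring
  have hG : HasGradientAt w 0 0 := by
    rw [hasGradientAt_iff_hasFDerivAt]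
    simpa using hW
  exact hG.gradient
end
end

section
/- Let γ, v₀, w₀ ∈ ℝ. There exists a (necessarily unique) smooth solution v : ℝ → ℝ of the ordinary differential equation v'' + ((γ−1)/2)·(v')² + e^{2v} = 0 on all of (−∞,∞) with v(0) = v₀ and v'(0) = w₀ if and only if either −1 ≤ γ ≤ 1, or w₀ ≠ 0 and −1 − 2·w₀⁻²·e^{2v₀} < γ < −1, or w₀ = 0 and γ < −1. -/
noncomputable section

section Aux
open Set Filter Topology
open scoped NNReal Manifold

/-- A globally Lipschitz `C¹` field has a global integral curve through every point. -/
lemma global_curve {E : Type*} [NormedAddCommGroup E] [NormedSpace ℝ E] [CompleteSpace E]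
    (F : E → E) (K : ℝ≥0) (hK : 0 < K) (hL : LipschitzWith K F) (hC : ContDiff ℝ 1 F) (x : E) :
    ∃ α : ℝ → E, α 0 = x ∧ ∀ t, HasDerivAt α (F (α t)) t := by
  have hloc : ∀ x : E, ∃ α : ℝ → E, α 0 = x ∧
      IsMIntegralCurveOn (I := 𝓘(ℝ, E)) α F (Ioo (-(1 / (2 * K) : ℝ)) (1 / (2 * K) : ℝ)) := by
    intro x
    have hKr : (0 : ℝ) < K := hK
    have hε : (0 : ℝ) < 1 / (2 * K) := by positivity
    let a : ℝ≥0 := (‖F x‖₊ + 1) / K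
    let L : ℝ≥0 := 2 * ‖F x‖₊ + 1
    have hPL : IsPicardLindelof (fun _ => F) (tmin := -(1 / (2 * K) : ℝ)) (tmax := 1 / (2 * K))
        ⟨0, by constructor <;> linarith⟩ x a 0 L K := by
      refine ⟨fun t _ => hL.lipschitzOnWith, fun _ _ => continuousOn_const, fun t _ y hy => ?_, ?_⟩
      · have h1 := hL.dist_le_mul y x
        rw [dist_eq_norm] at h1
        have h2 : (K : ℝ) * dist y x ≤ K * a := by gcongr; exact hy
        have h3 : (K : ℝ) * a = ‖F x‖ + 1 := by simp [a]; field_simp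
        have h4 : ‖F y‖ ≤ ‖F x‖ + ‖F y - F x‖ := by
          simpa using norm_add_le (F x) (F y - F x)
        simp only [L]; push_cast
        linarith
      · simp only [L, a]; push_cast
        rw [sub_zero, zero_sub, neg_neg, max_self, sub_zero, mul_one_div,
          div_le_div_iff₀ (by positivity) hKr]
        have := norm_nonneg (F x)
        nlinarith
    obtain ⟨α, h0, h1⟩ := hPL.exists_eq_forall_mem_Icc_hasDerivWithinAt₀
    refine ⟨α, h0, fun t ht => ?_⟩
    exact ((h1 t (Ioo_subset_Icc_self ht)).mono Ioo_subset_Icc_self).hasFDerivWithinAt.hasMFDerivWithinAt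
  obtain ⟨α, h0, h1⟩ := exists_isMIntegralCurve_of_isMIntegralCurveOn (I := 𝓘(ℝ, E)) (v := F)
    (contMDiff_vectorSpace_iff_contDiff.2 hC) (by positivity) hloc x
  refine ⟨α, h0, fun t => ?_⟩
  have h2 : HasFDerivAt α ((1 : ℝ →L[ℝ] ℝ).smulRight (F (α t))) t := (h1 t).hasFDerivAt
  simpa using h2.hasDerivAt

/-- second order version -/
lemma global_second (g g' : ℝ → ℝ) (K : ℝ) (hg : ∀ x, HasDerivAt g (g' x) x) (hc : Continuous g')
    (hK : ∀ x, |g' x| ≤ K) (x₀ p₀ : ℝ) : ∃ u p : ℝ → ℝ, u 0 = x₀ ∧ p 0 = p₀ ∧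
      (∀ t, HasDerivAt u (p t) t) ∧ ∀ t, HasDerivAt p (g (u t)) t := by
  have hgC : ContDiff ℝ 1 g := by
    rw [contDiff_one_iff_deriv]
    refine ⟨fun x => (hg x).differentiableAt, ?_⟩
    rwa [show deriv g = g' from funext fun x => (hg x).deriv]
  have hgL : LipschitzWith K.toNNReal g := lipschitzWith_of_nnnorm_deriv_le
    (fun x => (hg x).differentiableAt) (fun x => by
      rw [(hg x).deriv, ← NNReal.coe_le_coe, coe_nnnorm, Real.norm_eq_abs]
      exact (hK x).trans (Real.le_coe_toNNReal K))
  have hFL : LipschitzWith (max 1 K.toNNReal) (fun z : ℝ × ℝ => (z.2, g z.1)) := by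
    refine LipschitzWith.prodMk LipschitzWith.prod_snd ?_
    simpa [Function.comp_def] using hgL.comp LipschitzWith.prod_fst
  obtain ⟨α, h0, h1⟩ := global_curve (fun z : ℝ × ℝ => (z.2, g z.1)) _
    (lt_of_lt_of_le one_pos (le_max_left _ _)) hFL
    (contDiff_snd.prodMk (hgC.comp contDiff_fst)) (x₀, p₀)
  refine ⟨fun t => (α t).1, fun t => (α t).2, by simp [h0], by simp [h0], fun t => ?_, fun t => ?_⟩
  · exact (h1 t).fst
  · exact (h1 t).snd

/-- second order equation with a potential barrier at `m` -/
lemma global_barrier (f f' F : ℝ → ℝ) (K m x₀ p₀ : ℝ) (hm : m < x₀)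
    (hf : ∀ x, m ≤ x → HasDerivAt f (f' x) x) (hF : ∀ x, m ≤ x → HasDerivAt F (f x) x)
    (hc : ContinuousOn f' (Ici m)) (hK : ∀ x, m ≤ x → |f' x| ≤ K)
    (hb : p₀ ^ 2 / 2 < F x₀ - F m) :
    ∃ u p : ℝ → ℝ, u 0 = x₀ ∧ p 0 = p₀ ∧ (∀ t, m < u t) ∧
      (∀ t, HasDerivAt u (p t) t) ∧ ∀ t, HasDerivAt p (f (u t)) t := by
  have hc' : Continuous (fun x => f' (max x m)) :=
    hc.comp_continuous (by fun_prop) (fun x => mem_Ici.2 (le_max_right _ _))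
  set g : ℝ → ℝ := fun x => f m + ∫ s in m..x, f' (max s m) with hgdef
  have hg : ∀ x, HasDerivAt g (f' (max x m)) x := fun x =>
    (intervalIntegral.integral_hasDerivAt_right (hc'.intervalIntegrable _ _)
      (hc'.stronglyMeasurableAtFilter _ _) hc'.continuousAt).const_add _
  have hgc : Continuous g := continuous_iff_continuousAt.2 fun x => (hg x).continuousAt
  have hgf : ∀ x, m ≤ x → g x = f x := by
    intro x hx
    have h1 : ∫ s in m..x, f' (max s m) = f x - f m := by
      apply intervalIntegral.integral_eq_sub_of_hasDerivAt
      · intro s hs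
        rw [uIcc_of_le hx] at hs
        simp only [max_eq_left hs.1]
        exact hf s hs.1
      · exact hc'.intervalIntegrable _ _
    simp only [hgdef]; rw [h1]; ring
  obtain ⟨u, p, hu0, hp0, hu, hp⟩ := global_second g (fun x => f' (max x m)) K hg hc'
    (fun x => hK _ (le_max_right _ _)) x₀ p₀
  have huc : Continuous u := continuous_iff_continuousAt.2 fun x => (hu x).continuousAt
  set G : ℝ → ℝ := fun x => ∫ s in m..x, g s with hG
  have hGd : ∀ x, HasDerivAt G (g x) x := fun x =>
    intervalIntegral.integral_hasDerivAt_right (hgc.intervalIntegrable _ _)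
      (hgc.stronglyMeasurableAtFilter _ _) hgc.continuousAt
  have hE : ∀ t, HasDerivAt (fun t => p t ^ 2 / 2 - G (u t)) 0 t := by
    intro t
    convert! (((hp t).pow 2).div_const 2).sub ((hGd (u t)).comp t (hu t)) using 1
    simp; ring
  have hconst : ∀ t, p t ^ 2 / 2 - G (u t) = p 0 ^ 2 / 2 - G (u 0) := fun t =>
    is_const_of_deriv_eq_zero (fun s => (hE s).differentiableAt) (fun s => (hE s).deriv) t 0
  have hGx : G x₀ = F x₀ - F m := by
    apply intervalIntegral.integral_eq_sub_of_hasDerivAt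
    · intro s hs
      rw [uIcc_of_le hm.le] at hs
      rw [hgf s hs.1]
      exact hF s hs.1
    · exact hgc.intervalIntegrable _ _
  have hne : ∀ t, u t ≠ m := by
    intro t ht
    have h1 := hconst t
    rw [ht, hu0, hp0, hGx] at h1
    have h2 : G m = 0 := by simp [hG]
    have := sq_nonneg (p t)
    linarith
  have hum : ∀ t, m < u t := by
    intro t
    by_contra hcon
    push Not at hcon
    obtain ⟨s, hs⟩ := mem_range_of_exists_le_of_exists_ge huc ⟨t, hcon⟩ ⟨0, by rw [hu0]; exact hm.le⟩
    exact hne s hs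
  refine ⟨u, p, hu0, hp0, hum, hu, fun t => ?_⟩
  rw [← hgf _ (hum t).le]
  exact hp t

/-- the equation `u'' = α u^(1-2/α)` -/
lemma global_u (α : ℝ) (hα : 0 < α) (v₀ w₀ : ℝ) 
    (h : 1 < α → w₀ ^ 2 * (α - 1) < Real.exp (2 * v₀)) :
    ∃ u p : ℝ → ℝ, u 0 = Real.exp (-α * v₀) ∧ p 0 = -α * w₀ * Real.exp (-α * v₀) ∧ (∀ t, 0 < u t) ∧
      (∀ t, HasDerivAt u (p t) t) ∧ ∀ t, HasDerivAt p (α * u t ^ (1 - 2 / α)) t := by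
  -- the potential
  obtain ⟨F, hF, M, hM, hb⟩ : ∃ F : ℝ → ℝ, (∀ x, 0 < x → HasDerivAt F (α * x ^ (1 - 2 / α)) x) ∧
      ∃ M, v₀ < M ∧ (-α * w₀ * Real.exp (-α * v₀)) ^ 2 / 2 <
        F (Real.exp (-α * v₀)) - F (Real.exp (-α * M)) := by
    rcases eq_or_ne α 1 with rfl | h1
    · refine ⟨Real.log, fun x hx => ?_, ?_⟩
      · convert Real.hasDerivAt_log hx.ne' using 1
        rw [show (1 - 2 / 1 : ℝ) = -1 by norm_num, Real.rpow_neg_one, one_mul]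
      · simp only [Real.log_exp]
        refine ⟨v₀ + ((-1 * w₀ * Real.exp (-1 * v₀)) ^ 2 / 2 + 1), ?_, ?_⟩
        · have : 0 ≤ (-1 * w₀ * Real.exp (-1 * v₀)) ^ 2 / 2 := by positivity
          linarith
        · linarith
    · have h1' : α - 1 ≠ 0 := sub_ne_zero.2 h1
      have hrpow : ∀ y : ℝ, Real.exp (-α * y) ^ (2 - 2 / α) = Real.exp (2 * (1 - α) * y) := by
        intro y
        rw [← Real.exp_mul]; congr 1; field_simp; ring
      refine ⟨fun x => α ^ 2 / (2 * (α - 1)) * x ^ (2 - 2 / α), fun x hx => ?_, ?_⟩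
      · have h2 := (Real.hasDerivAt_rpow_const (p := 2 - 2 / α) (Or.inl hx.ne')).const_mul
          (α ^ 2 / (2 * (α - 1)))
        convert! h2 using 1
        rw [show 2 - 2 / α - 1 = 1 - 2 / α by ring]
        field_simp
      · simp only [hrpow]
        have hlim : ∃ᶠ M in atTop, (-α * w₀ * Real.exp (-α * v₀)) ^ 2 / 2 <
            α ^ 2 / (2 * (α - 1)) * Real.exp (2 * (1 - α) * v₀) -
            α ^ 2 / (2 * (α - 1)) * Real.exp (2 * (1 - α) * M) := by
          apply Eventually.frequently
          rcases lt_or_gt_of_ne h1 with hlt | hgt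
          · have ht : Tendsto (fun M : ℝ => α ^ 2 / (2 * (α - 1)) * Real.exp (2 * (1 - α) * v₀) +
              (α ^ 2 / (2 * (1 - α))) * Real.exp (2 * (1 - α) * M)) atTop atTop := by
              apply tendsto_atTop_add_const_left
              apply Tendsto.const_mul_atTop (div_pos (by positivity) (by linarith))
              exact Real.tendsto_exp_atTop.comp
                (tendsto_id.const_mul_atTop (by linarith))
            filter_upwards [ht.eventually_gt_atTop ((-α * w₀ * Real.exp (-α * v₀)) ^ 2 / 2)] with M hM
            refine hM.trans_eq ?_
            rw [show 2 * (α - 1) = -(2 * (1 - α)) by ring, div_neg]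
            ring
          · have ht : Tendsto (fun M : ℝ => α ^ 2 / (2 * (α - 1)) * Real.exp (2 * (1 - α) * v₀) -
              (α ^ 2 / (2 * (α - 1))) * Real.exp (2 * (1 - α) * M)) atTop
              (𝓝 (α ^ 2 / (2 * (α - 1)) * Real.exp (2 * (1 - α) * v₀) - 
                (α ^ 2 / (2 * (α - 1))) * 0)) := by
              apply Tendsto.const_sub
              apply Tendsto.const_mul
              exact Real.tendsto_exp_atBot.comp
                (tendsto_id.const_mul_atTop_of_neg (by linarith))
            refine ht.eventually_const_lt ?_
            have h2 := h hgt
            have h3 : Real.exp (2 * (1 - α) * v₀) = Real.exp (2 * v₀) * Real.exp (-α * v₀) ^ 2 := by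
              rw [sq, ← Real.exp_add, ← Real.exp_add]; congr 1; ring
            rw [h3, mul_zero, sub_zero, div_mul_eq_mul_div, div_lt_div_iff₀ two_pos (by linarith)]
            have h4 : 0 < α ^ 2 * Real.exp (-α * v₀) ^ 2 := by positivity
            nlinarith
        obtain ⟨M, hM1, hM2⟩ := (hlim.and_eventually (eventually_gt_atTop v₀)).exists
        exact ⟨M, hM2, hM1⟩
  have hmpos : 0 < Real.exp (-α * M) := Real.exp_pos _
  obtain ⟨u, p, hu0, hp0, hum, hu, hp⟩ := global_barrier (fun x => α * x ^ (1 - 2 / α))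
    (fun x => α * ((1 - 2 / α) * x ^ (1 - 2 / α - 1))) F
    (α * (|1 - 2 / α| * Real.exp (-α * M) ^ (1 - 2 / α - 1)))
    (Real.exp (-α * M)) (Real.exp (-α * v₀)) (-α * w₀ * Real.exp (-α * v₀))
    (Real.exp_lt_exp.2 (by nlinarith))
    (fun x hx => (Real.hasDerivAt_rpow_const (Or.inl (hmpos.trans_le hx).ne')).const_mul α)
    (fun x hx => hF x (hmpos.trans_le hx))
    (fun x hx => by
      have : x ≠ 0 := (hmpos.trans_le hx).ne'
      exact (continuousAt_const.mul (continuousAt_const.mul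
        (Real.continuousAt_rpow_const x _ (Or.inl this)))).continuousWithinAt)
    (fun x hx => by
      have hx0 : 0 < x := hmpos.trans_le hx
      rw [abs_mul, abs_mul, abs_of_pos hα, abs_of_pos (Real.rpow_pos_of_pos hx0 _)]
      gcongr α * (|1 - 2 / α| * ?_)
      apply Real.rpow_le_rpow_of_nonpos hmpos hx
      have : 0 < 2 / α := by positivity
      linarith) hb
  exact ⟨u, p, hu0, hp0, fun t => hmpos.trans (hum t), hu, hp⟩

lemma global_neg (α : ℝ) (hα : 0 < α) (v₀ w₀ : ℝ) 
    (h : 1 < α → w₀ ^ 2 * (α - 1) < Real.exp (2 * v₀)) :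
    ∃ v w : ℝ → ℝ, ContDiff ℝ (⊤ : ℕ∞) v ∧ v 0 = v₀ ∧ w 0 = w₀ ∧
    (∀ t, HasDerivAt v (w t) t) ∧ ∀ t, HasDerivAt w (α * w t ^ 2 - Real.exp (2 * v t)) t := by
  obtain ⟨u, p, hu0, hp0, hpos, hu, hp⟩ := global_u α hα v₀ w₀ h
  have hdu : deriv u = p := funext fun t => (hu t).deriv
  have hdp : deriv p = fun t => α * u t ^ (1 - 2 / α) := funext fun t => (hp t).deriv
  have hsm : ∀ n : ℕ, ContDiff ℝ n u ∧ ContDiff ℝ n p := by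
    intro n
    induction n with
    | zero =>
      constructor
      · exact contDiff_zero.2 (continuous_iff_continuousAt.2 fun x => (hu x).continuousAt)
      · exact contDiff_zero.2 (continuous_iff_continuousAt.2 fun x => (hp x).continuousAt)
    | succ n ih =>
      push_cast
      constructor
      · rw [contDiff_succ_iff_deriv]
        refine ⟨fun x => (hu x).differentiableAt, by simp, ?_⟩
        rw [hdu]; exact ih.2
      · rw [contDiff_succ_iff_deriv]
        refine ⟨fun x => (hp x).differentiableAt, by simp, ?_⟩
        rw [hdp]
        exact contDiff_const.mul (ih.1.rpow_const_of_ne fun t => (hpos t).ne')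
  have hsmu : ContDiff ℝ (⊤ : ℕ∞) u := contDiff_infty.2 fun n => (hsm n).1
  refine ⟨fun t => -(1 / α) * Real.log (u t), fun t => -(1 / α) * (p t / u t), ?_, ?_, ?_, ?_, ?_⟩
  · exact contDiff_const.mul (hsmu.log fun t => (hpos t).ne')
  · simp only [hu0, Real.log_exp]; field_simp
  · simp only [hu0, hp0]
    have := (Real.exp_pos (-α * v₀)).ne'
    field_simp
  · intro t
    exact ((hu t).log (hpos t).ne').const_mul _
  · intro t
    convert! (((hp t).div (hu t) (hpos t).ne').const_mul (-(1 / α))) using 1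
    have h1 : Real.exp (2 * (-(1 / α) * Real.log (u t))) = u t ^ (- (2 / α)) := by
      rw [Real.rpow_def_of_pos (hpos t)]; congr 1; ring
    have h2 : u t ^ (1 - 2 / α) = u t * u t ^ (- (2 / α)) := by
      rw [sub_eq_add_neg, Real.rpow_add (hpos t), Real.rpow_one]
    rw [h1, h2]
    have := (hpos t).ne'
    field_simp
    ring


/-- Necessity, `γ > 1`. -/
lemma noglobal_pos (a : ℝ) (ha : 0 < a) (v w : ℝ → ℝ) 
    (hw : ∀ t, HasDerivAt w (-a * w t ^ 2 - Real.exp (2 * v t)) t) : False := by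
  have hneg : ∀ t, -a * w t ^ 2 - Real.exp (2 * v t) < 0 := fun t => by
    have := Real.exp_pos (2 * v t)
    have : 0 ≤ a * w t ^ 2 := by positivity
    linarith
  have hanti : StrictAnti w := strictAnti_of_deriv_neg (fun t => by rw [(hw t).deriv]; exact hneg t)
  have hinv : ∀ t, w t ≠ 0 →
      HasDerivAt (fun s => (w s)⁻¹) (-(-a * w t ^ 2 - Real.exp (2 * v t)) / w t ^ 2) t :=
    fun t ht => (hw t).inv ht
  have hge : ∀ t, w t ≠ 0 → a ≤ -(-a * w t ^ 2 - Real.exp (2 * v t)) / w t ^ 2 := by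
    intro t ht
    rw [le_div_iff₀ (by positivity)]
    have := Real.exp_pos (2 * v t)
    linarith
  -- general comparison on an interval where w does not vanish
  have key : ∀ x y, x < y → (∀ s ∈ Icc x y, w s ≠ 0) → a * (y - x) ≤ (w y)⁻¹ - (w x)⁻¹ := by
    intro x y hxy h
    obtain ⟨c, hc, hc'⟩ := exists_hasDerivAt_eq_slope (fun s => (w s)⁻¹) _ hxy
      (fun s hs => (hinv s (h s hs)).continuousAt.continuousWithinAt)
      (fun s hs => hinv s (h s (Ioo_subset_Icc_self hs)))
    have h1 := hge c (h c (Ioo_subset_Icc_self hc))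
    rw [hc', le_div_iff₀ (by linarith)] at h1
    exact h1
  by_cases h0 : ∃ t, w t < 0
  · obtain ⟨t, ht⟩ := h0
    have hlt : ∀ s, t ≤ s → w s < 0 := fun s hs => (hanti.antitone hs).trans_lt ht
    set y := t + (-(w t)⁻¹) / a with hy
    have hpos : 0 < (-(w t)⁻¹) / a := div_pos (neg_pos.2 (inv_lt_zero.2 ht)) ha
    have h1 := key t y (by linarith) (fun s hs => (hlt s hs.1).ne)
    have h2 : a * (y - t) = -(w t)⁻¹ := by rw [hy]; field_simp; ring
    have h3 : (w y)⁻¹ < 0 := inv_lt_zero.2 (hlt y (by linarith))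
    linarith
  · push Not at h0
    have hp : ∀ t, 0 < w t := fun t => (h0 (t + 1)).trans_lt (hanti (by linarith))
    set x := - ((w 0)⁻¹ / a) with hx
    have hpos : 0 < (w 0)⁻¹ / a := div_pos (inv_pos.2 (hp 0)) ha
    have h1 := key x 0 (by linarith) (fun s _ => (hp s).ne')
    have h2 : a * (0 - x) = (w 0)⁻¹ := by rw [hx]; field_simp; ring
    have h3 : 0 < (w x)⁻¹ := inv_pos.2 (hp x)
    linarith

/-- a positive function with derivative bounded away from zero is impossible -/
lemma no_pos_of_deriv_sq (y y' : ℝ → ℝ) (k : ℝ) (hk : 0 < k) (hy : ∀ t, HasDerivAt y (y' t) t)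
    (hc : Continuous y') (hpos : ∀ t, 0 < y t) (h : ∀ t, k ^ 2 ≤ y' t ^ 2) : False := by
  have hne : ∀ t, y' t ≠ 0 := fun t h0 => by
    have := h t; rw [h0] at this; nlinarith
  have aux : ∀ z z' : ℝ → ℝ, (∀ t, HasDerivAt z (z' t) t) → (∀ t, 0 < z t) →
      (∀ t, k ≤ z' t) → False := by
    intro z z' hz hzp hzk
    have hm : Monotone (fun t => z t - k * t) := monotone_of_hasDerivAt_nonneg
      (f' := fun t => z' t - k * 1) (fun t => (hz t).sub ((hasDerivAt_id t).const_mul k))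
      (fun t => by have := hzk t; simp; linarith)
    have h1 := hm (show -(z 0 / k) ≤ 0 from neg_nonpos.2 (div_pos (hzp 0) hk).le)
    have h2 := hzp (-(z 0 / k))
    simp only at h1
    have h3 : k * -(z 0 / k) = - z 0 := by field_simp
    rw [h3] at h1
    linarith
  by_cases hp : ∀ t, 0 < y' t
  · exact aux y y' hy hpos fun t => (abs_le_of_sq_le_sq' (h t) (hp t).le).2
  · push Not at hp
    obtain ⟨t0, ht0⟩ := hp
    have hn : ∀ t, y' t < 0 := by
      intro t
      by_contra hcon
      push Not at hcon
      obtain ⟨s, hs⟩ := mem_range_of_exists_le_of_exists_ge hc ⟨t0, ht0⟩ ⟨t, hcon⟩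
      exact hne s hs
    refine aux (fun t => y (-t)) (fun t => - y' (-t)) (fun t => ?_) (fun t => hpos _) (fun t => ?_)
    · simpa [Function.comp_def] using! (hy (-t)).comp t (hasDerivAt_neg t)
    · have := hn (-t)
      exact (abs_le_of_sq_le_sq' (by have := h (-t); nlinarith) (by linarith)).2

/-- Necessity, `γ < -1`. -/
lemma noglobal_neg (γ : ℝ) (hγ : γ < -1) (v w : ℝ → ℝ) (hv : ∀ t, HasDerivAt v (w t) t)
    (hw : ∀ t, HasDerivAt w (-((γ - 1) / 2) * w t ^ 2 - Real.exp (2 * v t)) t)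
    (h0 : 2 * Real.exp (2 * v 0) ≤ -(γ + 1) * w 0 ^ 2) : False := by
  have hE : ∀ t, HasDerivAt (fun t => Real.exp ((γ - 1) * v t) *
      (-(γ + 1) * w t ^ 2 - 2 * Real.exp (2 * v t))) 0 t := by
    intro t
    have h1 := ((hv t).const_mul (γ - 1)).exp
    have h2 := ((hv t).const_mul 2).exp.const_mul 2
    have h3 := ((hw t).pow 2).const_mul (-(γ + 1))
    convert! h1.mul (h3.sub h2) using 1
    simp
    ring
  have hconst : ∀ t, Real.exp ((γ - 1) * v t) *
      (-(γ + 1) * w t ^ 2 - 2 * Real.exp (2 * v t)) = Real.exp ((γ - 1) * v 0) *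
      (-(γ + 1) * w 0 ^ 2 - 2 * Real.exp (2 * v 0)) := fun t =>
    is_const_of_deriv_eq_zero (fun s => (hE s).differentiableAt) (fun s => (hE s).deriv) t 0
  have hge : ∀ t, 0 ≤ -(γ + 1) * w t ^ 2 - 2 * Real.exp (2 * v t) := by
    intro t
    have h1 := hconst t
    have h2 : 0 ≤ Real.exp ((γ - 1) * v 0) *
      (-(γ + 1) * w 0 ^ 2 - 2 * Real.exp (2 * v 0)) := mul_nonneg (Real.exp_pos _).le (by linarith)
    rw [← h1] at h2
    exact nonneg_of_mul_nonneg_right h2 (Real.exp_pos _)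
  have hg : 0 < -(γ + 1) := by linarith
  refine no_pos_of_deriv_sq (fun t => Real.exp (-v t)) (fun t => Real.exp (-v t) * -w t)
    (Real.sqrt (2 / -(γ + 1))) (Real.sqrt_pos.2 (by positivity)) (fun t => (hv t).neg.exp) ?_
    (fun t => Real.exp_pos _) (fun t => ?_)
  · have h1 : Continuous v := continuous_iff_continuousAt.2 fun t => (hv t).continuousAt
    have h2 : Continuous w := continuous_iff_continuousAt.2 fun t => (hw t).continuousAt
    fun_prop
  · rw [Real.sq_sqrt (by positivity), div_le_iff₀ hg]
    have h1 := hge t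
    have h2 : Real.exp (2 * v t) * Real.exp (-v t) ^ 2 = 1 := by
      rw [sq, ← Real.exp_add, ← Real.exp_add]; simp; ring
    have h3 := mul_nonneg h1 (sq_nonneg (Real.exp (-v t)))
    nlinarith

/-- `γ = 1` : explicit solution. -/
lemma global_one (v₀ w₀ : ℝ) : ∃ v w : ℝ → ℝ, ContDiff ℝ (⊤ : ℕ∞) v ∧ v 0 = v₀ ∧ w 0 = w₀ ∧
    (∀ t, HasDerivAt v (w t) t) ∧ ∀ t, HasDerivAt w (- Real.exp (2 * v t)) t := by
  set c := Real.arsinh (-w₀ * Real.exp (-v₀)) with hc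
  set k := Real.exp v₀ * Real.cosh c with hk
  have hkp : 0 < k := mul_pos (Real.exp_pos _) (Real.cosh_pos _)
  have hlin : ∀ t, HasDerivAt (fun t : ℝ => k * t + c) k t := fun t => by
    simpa using ((hasDerivAt_id t).const_mul k).add_const c
  refine ⟨fun t => Real.log k - Real.log (Real.cosh (k * t + c)),
    fun t => - (k * Real.sinh (k * t + c) / Real.cosh (k * t + c)), ?_, ?_, ?_, ?_, ?_⟩
  · refine contDiff_const.sub (ContDiff.log ?_ fun t => (Real.cosh_pos _).ne')
    exact Real.contDiff_cosh.comp (by fun_prop)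
  · simp only [mul_zero, zero_add]
    rw [hk, Real.log_mul (Real.exp_pos _).ne' (Real.cosh_pos _).ne', Real.log_exp]; ring
  · simp only [mul_zero, zero_add]
    rw [hk, hc, Real.sinh_arsinh, ← hc]
    have := (Real.cosh_pos c).ne'
    have h2 : Real.exp v₀ * Real.exp (-v₀) = 1 := by rw [← Real.exp_add]; simp
    field_simp
    linear_combination (w₀) * h2
  · intro t
    have h1 := ((hlin t).cosh.log (Real.cosh_pos _).ne').const_sub (Real.log k)
    convert! h1 using 1
    ring
  · intro t
    have h0 := (Real.cosh_pos (k * t + c)).ne'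
    have h1 := (((hlin t).sinh.const_mul k).div (hlin t).cosh h0).neg
    convert! h1 using 1
    rw [mul_sub, Real.exp_sub, mul_comm 2, mul_comm 2, Real.exp_mul, Real.exp_mul, Real.exp_log hkp,
      Real.exp_log (Real.cosh_pos _)]
    have := Real.cosh_sq (k * t + c)
    simp only [Real.rpow_ofNat]
    field_simp
    linear_combination this

end Aux

/-- **Global existence for the radial ODE** (Lemma 5.3): for `γ, v₀, w₀ ∈ ℝ`, the ODE
`v'' + ((γ-1)/2)(v')² + e^{2v} = 0` has a (necessarily unique) smooth solution on all of
`(-∞, ∞)` with `v(0) = v₀`, `v'(0) = w₀` iff `-1 ≤ γ ≤ 1`, or `w₀ ≠ 0` and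
`-1 - 2 w₀⁻² e^{2v₀} < γ < -1`, or `w₀ = 0` and `γ < -1`. -/
theorem ode_global_existence (γ v₀ w₀ : ℝ) :
    (∃ v : ℝ → ℝ, ContDiff ℝ (⊤ : ℕ∞) v ∧ v 0 = v₀ ∧ deriv v 0 = w₀ ∧
      ∀ t : ℝ, deriv (deriv v) t + ((γ - 1) / 2) * (deriv v t) ^ 2 +
        Real.exp (2 * v t) = 0) ↔
    ((-1 ≤ γ ∧ γ ≤ 1) ∨
      (w₀ ≠ 0 ∧ -1 - 2 * (w₀ ^ 2)⁻¹ * Real.exp (2 * v₀) < γ ∧ γ < -1) ∨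
      (w₀ = 0 ∧ γ < -1)) := by
  have hode : ∀ v w : ℝ → ℝ, (∀ t, HasDerivAt v (w t) t) →
      (∀ t, HasDerivAt w (-((γ - 1) / 2) * w t ^ 2 - Real.exp (2 * v t)) t) →
      ∀ t : ℝ, deriv (deriv v) t + ((γ - 1) / 2) * (deriv v t) ^ 2 + Real.exp (2 * v t) = 0 := by
    intro v w hv hw t
    rw [show deriv v = w from funext fun t => (hv t).deriv, (hw t).deriv]
    ring
  constructor
  · rintro ⟨v, hsm, hv0, hw0, heq⟩
    have hv : ∀ t, HasDerivAt v (deriv v t) t := fun t =>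
      ((hsm.differentiable (by simp)) t).hasDerivAt
    have hd : Differentiable ℝ (deriv v) := by
      have h1 : ContDiff ℝ (1 + 1 : ℕ∞) v := hsm.of_le (by exact_mod_cast le_top)
      have h2 : ContDiff ℝ 1 (deriv v) :=
        ((contDiff_succ_iff_deriv (n := 1)).1 (by simpa using h1)).2.2
      exact h2.differentiable (by simp)
    have hw : ∀ t, HasDerivAt (deriv v)
        (-((γ - 1) / 2) * deriv v t ^ 2 - Real.exp (2 * v t)) t := by
      intro t
      convert! (hd t).hasDerivAt using 1
      linear_combination -(heq t)
    have hle : γ ≤ 1 := by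
      by_contra hcon
      push Not at hcon
      exact noglobal_pos ((γ - 1) / 2) (by linarith) v (deriv v) hw
    rcases le_or_gt (-1) γ with h1 | h1
    · exact Or.inl ⟨h1, hle⟩
    · right
      rcases eq_or_ne w₀ 0 with h0 | h0
      · exact Or.inr ⟨h0, h1⟩
      · refine Or.inl ⟨h0, ?_, h1⟩
        by_contra hcon
        push Not at hcon
        refine noglobal_neg γ h1 v (deriv v) hv hw ?_
        rw [hv0, hw0]
        have hp : 0 < w₀ ^ 2 := by positivity
        have h2 := mul_le_mul_of_nonneg_right hcon hp.le
        have h3 : (-1 - 2 * (w₀ ^ 2)⁻¹ * Real.exp (2 * v₀)) * w₀ ^ 2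
            = - w₀ ^ 2 - 2 * Real.exp (2 * v₀) := by field_simp
        rw [h3] at h2
        linarith
  · intro h
    by_cases h1 : γ = 1
    · obtain ⟨v, w, hsm, hv0, hw0, hv, hw⟩ := global_one v₀ w₀
      refine ⟨v, hsm, hv0, by rw [(hv 0).deriv, hw0], hode v w hv fun t => ?_⟩
      convert! hw t using 1
      rw [h1]; ring
    · have hlt : γ < 1 := by
        rcases h with h | h | h
        · exact lt_of_le_of_ne h.2 h1
        · linarith [h.2.2]
        · linarith [h.2]
      obtain ⟨v, w, hsm, hv0, hw0, hv, hw⟩ := global_neg (-((γ - 1) / 2)) (by linarith) v₀ w₀ (by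
        intro hα
        have hexp := Real.exp_pos (2 * v₀)
        rcases h with h | h | h
        · linarith [h.1]
        · have hp : 0 < w₀ ^ 2 := by have := h.1; positivity
          have h2 := mul_lt_mul_of_pos_right h.2.1 hp
          have h3 : (-1 - 2 * (w₀ ^ 2)⁻¹ * Real.exp (2 * v₀)) * w₀ ^ 2
              = - w₀ ^ 2 - 2 * Real.exp (2 * v₀) := by have := h.1; field_simp
          rw [h3] at h2
          linarith
        · rw [h.1]; simpa using hexp)
      exact ⟨v, hsm, hv0, by rw [(hv 0).deriv, hw0], hode v w hv hw⟩
end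
end
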